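/- arXiv:2512.05054 — 7 statements merged into one kernel-verified Lean document; each statement's English description precedes it below -/
import Mathlib

section
/- Under assumptions (h1) and (h2), the map s : (K₁ \ {0}) × D → (0,∞) is continuous. -/
/-!
STATEMENT 1: Under assumptions (h1) and (h2), the map s : (K₁ \ {0}) × D → (0,∞)
is continuous.
-/

open Filter Topology in
theorem nehari_scaling_continuous
    {X₁ X₂ : Type*}
    [NormedAddCommGroup X₁] [NormedSpace ℝ X₁] [CompleteSpace X₁]
    [NormedAddCommGroup X₂] [NormedSpace ℝ X₂] [CompleteSpace X₂]
    -- K₁ is a non-degenerate cone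
    (K₁ : Set X₁) (hK₁closed : IsClosed K₁) (hK₁conv : Convex ℝ K₁)
    (hK₁cone : ∀ lam : ℝ, 0 ≤ lam → ∀ u ∈ K₁, lam • u ∈ K₁)
    (hK₁nondeg : ∃ u ∈ K₁, u ≠ 0)
    -- D is nonempty, bounded, closed, convex
    (D : Set X₂) (hDne : D.Nonempty) (hDbdd : Bornology.IsBounded D)
    (hDclosed : IsClosed D) (hDconv : Convex ℝ D)
    -- the operator T₁ : K₁ × D → K₁ is continuous
    (T₁ : X₁ → X₂ → X₁) (hT₁maps : ∀ u ∈ K₁, ∀ v ∈ D, T₁ u v ∈ K₁)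
    (hT₁cont : ContinuousOn (fun p : X₁ × X₂ => T₁ p.1 p.2) (K₁ ×ˢ D))
    -- the functional 𝓕 : K₁ × K₁ → ℝ, continuous, with 𝓕(λu,u)=0 ↔ λ=1
    (F : X₁ → X₁ → ℝ)
    (hFcont : ContinuousOn (fun p : X₁ × X₁ => F p.1 p.2) (K₁ ×ˢ K₁))
    (hF : ∀ u ∈ K₁, u ≠ 0 → ∀ lam : ℝ, 0 < lam → (F (lam • u) u = 0 ↔ lam = 1))
    -- condition (h1): s(u,v) is the unique positive zero
    (s : X₁ → X₂ → ℝ)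
    (h1 : ∀ u ∈ K₁, u ≠ 0 → ∀ v ∈ D,
      0 < s u v ∧ F (T₁ (s u v • u) v) (s u v • u) = 0 ∧
      ∀ σ : ℝ, 0 < σ → F (T₁ (σ • u) v) (σ • u) = 0 → σ = s u v)
    -- condition (h2): m < s < M on the unit sphere of the cone, times D
    (m M : ℝ) (hm : 0 < m) (hmM : m < M)
    (h2 : ∀ u ∈ K₁, ‖u‖ = 1 → ∀ v ∈ D, m < s u v ∧ s u v < M) :
    ContinuousOn (fun p : X₁ × X₂ => s p.1 p.2) ((K₁ \ {0}) ×ˢ D) := by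
  have hb : ∀ u ∈ K₁, u ≠ 0 → ∀ v ∈ D, m < s u v * ‖u‖ ∧ s u v * ‖u‖ < M := by
    intro u hu hu0 v hv
    have hn : 0 < ‖u‖ := norm_pos_iff.mpr hu0
    have hw : ‖u‖⁻¹ • u ∈ K₁ := hK₁cone _ (by positivity) u hu
    have hw1 : ‖‖u‖⁻¹ • u‖ = 1 := by
      rw [norm_smul, norm_inv, norm_norm, inv_mul_cancel₀ hn.ne']
    have hw0 : ‖u‖⁻¹ • u ≠ 0 := by
      intro h
      rw [h, norm_zero] at hw1
      exact zero_ne_one hw1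
    obtain ⟨hs, hz, -⟩ := h1 u hu hu0 v hv
    have key : s u v * ‖u‖ = s (‖u‖⁻¹ • u) v := by
      apply (h1 _ hw hw0 v hv).2.2 _ (by positivity)
      have : (s u v * ‖u‖) • (‖u‖⁻¹ • u) = s u v • u := by
        rw [smul_smul, mul_assoc, mul_inv_cancel₀ hn.ne', mul_one]
      rw [this]
      exact hz
    rw [key]
    exact h2 _ hw hw1 v hv
  rintro ⟨u₀, v₀⟩ ⟨⟨hu₀, hu₀0⟩, hv₀⟩
  have hu₀0 : u₀ ≠ 0 := hu₀0
  simp only at hu₀ hv₀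
  have hn : 0 < ‖u₀‖ := norm_pos_iff.mpr hu₀0
  have hM : 0 < M := hm.trans hmM
  have hmem : ∀ᶠ p : X₁ × X₂ in 𝓝[(K₁ \ {0}) ×ˢ D] (u₀, v₀), p ∈ (K₁ \ {0}) ×ˢ D :=
    eventually_mem_nhdsWithin
  have hfst : Tendsto (fun p : X₁ × X₂ => p.1) (𝓝[(K₁ \ {0}) ×ˢ D] (u₀, v₀)) (𝓝 u₀) :=
    (continuous_fst.tendsto (u₀, v₀)).mono_left nhdsWithin_le_nhds
  have hsnd : Tendsto (fun p : X₁ × X₂ => p.2) (𝓝[(K₁ \ {0}) ×ˢ D] (u₀, v₀)) (𝓝 v₀) :=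
    (continuous_snd.tendsto (u₀, v₀)).mono_left nhdsWithin_le_nhds
  refine (isCompact_Icc (a := m / (2 * ‖u₀‖)) (b := 2 * M / ‖u₀‖)).tendsto_nhds_of_unique_mapClusterPt
    ?_ ?_
  · filter_upwards [hmem, hfst.norm.eventually (lt_mem_nhds (half_lt_self hn)),
      hfst.norm.eventually (gt_mem_nhds (show ‖u₀‖ < 2 * ‖u₀‖ by linarith))] with p hp hlo hhi
    obtain ⟨⟨hp1, hp0⟩, hp2⟩ := hp
    obtain ⟨ha, hb'⟩ := hb p.1 hp1 hp0 p.2 hp2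
    have hs := (h1 p.1 hp1 hp0 p.2 hp2).1
    constructor
    · rw [div_le_iff₀ (by positivity)]
      nlinarith
    · rw [le_div_iff₀ hn]
      nlinarith
  · intro x hx hcl
    obtain ⟨U, hU, hxU⟩ := mapClusterPt_iff_ultrafilter.mp hcl
    have hx0 : 0 < x := lt_of_lt_of_le (by positivity) hx.1
    have hmemU := hU hmem
    have hsm : Tendsto (fun p : X₁ × X₂ => s p.1 p.2 • p.1) U (𝓝 (x • u₀)) :=
      hxU.smul (hfst.mono_left hU)
    have hsK : ∀ᶠ p : X₁ × X₂ in U, s p.1 p.2 • p.1 ∈ K₁ := by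
      filter_upwards [hmemU] with p hp
      exact hK₁cone _ (h1 p.1 hp.1.1 hp.1.2 p.2 hp.2).1.le _ hp.1.1
    have hxK : x • u₀ ∈ K₁ := hK₁cone _ hx0.le _ hu₀
    have hT : Tendsto (fun p : X₁ × X₂ => T₁ (s p.1 p.2 • p.1) p.2) U (𝓝 (T₁ (x • u₀) v₀)) := by
      refine (hT₁cont (x • u₀, v₀) ⟨hxK, hv₀⟩).tendsto.comp
        (tendsto_nhdsWithin_iff.mpr ⟨hsm.prodMk_nhds (hsnd.mono_left hU), ?_⟩)
      filter_upwards [hmemU, hsK] with p hp hk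
      exact ⟨hk, hp.2⟩
    have hFt : Tendsto (fun p : X₁ × X₂ => F (T₁ (s p.1 p.2 • p.1) p.2) (s p.1 p.2 • p.1)) U
        (𝓝 (F (T₁ (x • u₀) v₀) (x • u₀))) := by
      refine (hFcont (T₁ (x • u₀) v₀, x • u₀) ⟨hT₁maps _ hxK _ hv₀, hxK⟩).tendsto.comp
        (tendsto_nhdsWithin_iff.mpr ⟨hT.prodMk_nhds hsm, ?_⟩)
      filter_upwards [hmemU, hsK] with p hp hk
      exact ⟨hT₁maps _ hk _ hp.2, hk⟩
    have hzero : F (T₁ (x • u₀) v₀) (x • u₀) = 0 := by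
      refine tendsto_nhds_unique hFt (tendsto_const_nhds.congr' ?_)
      filter_upwards [hmemU] with p hp
      exact (h1 p.1 hp.1.1 hp.1.2 p.2 hp.2).2.1.symm
    exact (h1 u₀ hu₀ hu₀0 v₀ hv₀).2.2 x hx0 hzero
end

section
/- Under assumptions (h1) and (h2), if (u_k, v_k) is a sequence in (K₁ \ {0}) × D converging to (0, v) for some v ∈ D, then s(u_k, v_k) → ∞ as k → ∞. -/
/-!
STATEMENT 2: Under assumptions (h1) and (h2), if (u_k, v_k) is a sequence in
(K₁ \ {0}) × D converging to (0, v) for some v ∈ D, then s(u_k, v_k) → ∞ as k → ∞.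
-/

theorem nehari_scaling_tendsto_atTop
    {X₁ X₂ : Type*}
    [NormedAddCommGroup X₁] [NormedSpace ℝ X₁] [CompleteSpace X₁]
    [NormedAddCommGroup X₂] [NormedSpace ℝ X₂] [CompleteSpace X₂]
    -- K₁ is a non-degenerate cone
    (K₁ : Set X₁) (hK₁closed : IsClosed K₁) (hK₁conv : Convex ℝ K₁)
    (hK₁cone : ∀ lam : ℝ, 0 ≤ lam → ∀ u ∈ K₁, lam • u ∈ K₁)
    (hK₁nondeg : ∃ u ∈ K₁, u ≠ 0)
    -- D is nonempty, bounded, closed, convex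
    (D : Set X₂) (hDne : D.Nonempty) (hDbdd : Bornology.IsBounded D)
    (hDclosed : IsClosed D) (hDconv : Convex ℝ D)
    -- the operator T₁ : K₁ × D → K₁ is continuous
    (T₁ : X₁ → X₂ → X₁) (hT₁maps : ∀ u ∈ K₁, ∀ v ∈ D, T₁ u v ∈ K₁)
    (hT₁cont : ContinuousOn (fun p : X₁ × X₂ => T₁ p.1 p.2) (K₁ ×ˢ D))
    -- the functional 𝓕 : K₁ × K₁ → ℝ, continuous, with 𝓕(λu,u)=0 ↔ λ=1
    (F : X₁ → X₁ → ℝ)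
    (hFcont : ContinuousOn (fun p : X₁ × X₁ => F p.1 p.2) (K₁ ×ˢ K₁))
    (hF : ∀ u ∈ K₁, u ≠ 0 → ∀ lam : ℝ, 0 < lam → (F (lam • u) u = 0 ↔ lam = 1))
    -- condition (h1): s(u,v) is the unique positive zero
    (s : X₁ → X₂ → ℝ)
    (h1 : ∀ u ∈ K₁, u ≠ 0 → ∀ v ∈ D,
      0 < s u v ∧ F (T₁ (s u v • u) v) (s u v • u) = 0 ∧
      ∀ σ : ℝ, 0 < σ → F (T₁ (σ • u) v) (σ • u) = 0 → σ = s u v)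
    -- condition (h2): m < s < M on the unit sphere of the cone, times D
    (m M : ℝ) (hm : 0 < m) (hmM : m < M)
    (h2 : ∀ u ∈ K₁, ‖u‖ = 1 → ∀ v ∈ D, m < s u v ∧ s u v < M)
    -- the sequence (u_k, v_k) in (K₁ \ {0}) × D converging to (0, v)
    (u : ℕ → X₁) (v : ℕ → X₂)
    (hu : ∀ k, u k ∈ K₁ ∧ u k ≠ 0) (hv : ∀ k, v k ∈ D)
    (v₀ : X₂) (hv₀ : v₀ ∈ D)
    (hulim : Filter.Tendsto u Filter.atTop (nhds 0))
    (hvlim : Filter.Tendsto v Filter.atTop (nhds v₀)) :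
    Filter.Tendsto (fun k => s (u k) (v k)) Filter.atTop Filter.atTop := by
  have hlim : Filter.Tendsto (fun k => m * ‖u k‖⁻¹) Filter.atTop Filter.atTop := by
    apply Filter.Tendsto.const_mul_atTop hm
    apply Filter.Tendsto.inv_tendsto_nhdsGT_zero
    rw [tendsto_nhdsWithin_iff]
    refine ⟨by simpa using hulim.norm, Filter.Eventually.of_forall fun k => ?_⟩
    exact norm_pos_iff.mpr (hu k).2
  refine Filter.tendsto_atTop_mono (fun k => ?_) hlim
  obtain ⟨hk, hk0⟩ := hu k
  have hn : 0 < ‖u k‖ := norm_pos_iff.mpr hk0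
  have hw : ‖u k‖⁻¹ • u k ∈ K₁ := hK₁cone _ (by positivity) _ hk
  have hw1 : ‖‖u k‖⁻¹ • u k‖ = 1 := by
    rw [norm_smul, norm_inv, norm_norm, inv_mul_cancel₀ hn.ne']
  have hw0 : ‖u k‖⁻¹ • u k ≠ 0 := smul_ne_zero (inv_ne_zero hn.ne') hk0
  obtain ⟨hs, hz, -⟩ := h1 _ hk hk0 _ (hv k)
  have he : (s (u k) (v k) * ‖u k‖) • (‖u k‖⁻¹ • u k) = s (u k) (v k) • u k := by
    rw [smul_smul, mul_assoc, mul_inv_cancel₀ hn.ne', mul_one]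
  have heq := (h1 _ hw hw0 _ (hv k)).2.2 (s (u k) (v k) * ‖u k‖) (by positivity)
    (by rw [he]; exact hz)
  have hlt := (h2 _ hw hw1 _ (hv k)).1
  rw [← heq] at hlt
  rw [← div_eq_mul_inv]
  exact ((div_lt_iff₀ hn).mpr hlt).le
end

section
/- Under assumptions (h1) and (h2), the set U is open in the relative (subspace) topology of K₁ × D, and moreover U is a bounded subset of X₁ × X₂. -/
/-!
STATEMENT 3: Under assumptions (h1) and (h2), the set U is open in the relative
(subspace) topology of K₁ × D, and moreover U is a bounded subset of X₁ × X₂.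
-/

/-- The set `U_b = {(u,v) ∈ (K₁ \ {0}) × D : s(u,v) = 1}`. -/
def nehariUb {X₁ X₂ : Type*} [NormedAddCommGroup X₁] [NormedSpace ℝ X₁]
    [NormedAddCommGroup X₂] [NormedSpace ℝ X₂]
    (K₁ : Set X₁) (D : Set X₂) (s : X₁ → X₂ → ℝ) : Set (X₁ × X₂) :=
  {p : X₁ × X₂ | p.1 ∈ K₁ ∧ p.1 ≠ 0 ∧ p.2 ∈ D ∧ s p.1 p.2 = 1}

/-- The set `U = {(λ·u, v) : 0 ≤ λ < 1 and (u,v) ∈ U_b}`. -/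
def nehariU {X₁ X₂ : Type*} [NormedAddCommGroup X₁] [NormedSpace ℝ X₁]
    [NormedAddCommGroup X₂] [NormedSpace ℝ X₂]
    (K₁ : Set X₁) (D : Set X₂) (s : X₁ → X₂ → ℝ) : Set (X₁ × X₂) :=
  {q : X₁ × X₂ | ∃ lam : ℝ, 0 ≤ lam ∧ lam < 1 ∧
    ∃ p ∈ nehariUb K₁ D s, q = (lam • p.1, p.2)}

theorem nehariU_relatively_open_and_bounded
    {X₁ X₂ : Type*}
    [NormedAddCommGroup X₁] [NormedSpace ℝ X₁] [CompleteSpace X₁]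
    [NormedAddCommGroup X₂] [NormedSpace ℝ X₂] [CompleteSpace X₂]
    -- K₁ is a non-degenerate cone
    (K₁ : Set X₁) (hK₁closed : IsClosed K₁) (hK₁conv : Convex ℝ K₁)
    (hK₁cone : ∀ lam : ℝ, 0 ≤ lam → ∀ u ∈ K₁, lam • u ∈ K₁)
    (hK₁nondeg : ∃ u ∈ K₁, u ≠ 0)
    -- D is nonempty, bounded, closed, convex
    (D : Set X₂) (hDne : D.Nonempty) (hDbdd : Bornology.IsBounded D)
    (hDclosed : IsClosed D) (hDconv : Convex ℝ D)
    -- the operator T₁ : K₁ × D → K₁ is continuous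
    (T₁ : X₁ → X₂ → X₁) (hT₁maps : ∀ u ∈ K₁, ∀ v ∈ D, T₁ u v ∈ K₁)
    (hT₁cont : ContinuousOn (fun p : X₁ × X₂ => T₁ p.1 p.2) (K₁ ×ˢ D))
    -- the functional 𝓕 : K₁ × K₁ → ℝ, continuous, with 𝓕(λu,u)=0 ↔ λ=1
    (F : X₁ → X₁ → ℝ)
    (hFcont : ContinuousOn (fun p : X₁ × X₁ => F p.1 p.2) (K₁ ×ˢ K₁))
    (hF : ∀ u ∈ K₁, u ≠ 0 → ∀ lam : ℝ, 0 < lam → (F (lam • u) u = 0 ↔ lam = 1))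
    -- condition (h1): s(u,v) is the unique positive zero
    (s : X₁ → X₂ → ℝ)
    (h1 : ∀ u ∈ K₁, u ≠ 0 → ∀ v ∈ D,
      0 < s u v ∧ F (T₁ (s u v • u) v) (s u v • u) = 0 ∧
      ∀ σ : ℝ, 0 < σ → F (T₁ (σ • u) v) (σ • u) = 0 → σ = s u v)
    -- condition (h2): m < s < M on the unit sphere of the cone, times D
    (m M : ℝ) (hm : 0 < m) (hmM : m < M)
    (h2 : ∀ u ∈ K₁, ‖u‖ = 1 → ∀ v ∈ D, m < s u v ∧ s u v < M) :
    (∃ V : Set (X₁ × X₂), IsOpen V ∧ nehariU K₁ D s = V ∩ (K₁ ×ˢ D)) ∧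
      Bornology.IsBounded (nehariU K₁ D s) := by
  have hscale : ∀ u ∈ K₁, u ≠ 0 → ∀ v ∈ D, ∀ l : ℝ, 0 < l → s (l • u) v = s u v / l := by
    intro u hu hu0 v hv l hl
    have hlu : l • u ≠ 0 := smul_ne_zero hl.ne' hu0
    obtain ⟨a1, a2, a3⟩ := h1 (l • u) (hK₁cone l hl.le u hu) hlu v hv
    obtain ⟨b1, b2, b3⟩ := h1 u hu hu0 v hv
    have := b3 (s (l • u) v * l) (mul_pos a1 hl) (by rw [mul_smul]; exact a2)
    rw [eq_div_iff hl.ne']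
    exact this
  have hnorm : ∀ u ∈ K₁, u ≠ 0 → ∀ v ∈ D, m < s u v * ‖u‖ ∧ s u v * ‖u‖ < M := by
    intro u hu hu0 v hv
    have hp : 0 < ‖u‖ := norm_pos_iff.mpr hu0
    have hi : 0 < ‖u‖⁻¹ := inv_pos.mpr hp
    have h := h2 (‖u‖⁻¹ • u) (hK₁cone _ hi.le u hu)
      (by rw [norm_smul, norm_inv, norm_norm, inv_mul_cancel₀ hp.ne']) v hv
    rw [hscale u hu hu0 v hv _ hi, div_inv_eq_mul] at h
    exact h
  have hG : ContinuousOn (fun p : X₁ × X₂ => F (T₁ p.1 p.2) p.1) (K₁ ×ˢ D) := by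
    have h := hFcont.comp (hT₁cont.prodMk continuousOn_fst)
      (fun p hp => ⟨hT₁maps _ hp.1 _ hp.2, hp.1⟩)
    exact h
  constructor
  · refine ⟨{p : X₁ × X₂ | p.1 ∈ K₁ ∧ p.2 ∈ D ∧ p.1 ≠ 0 ∧ s p.1 p.2 ≤ 1}ᶜ, ?_, ?_⟩
    · rw [isOpen_compl_iff]
      apply IsSeqClosed.isClosed
      intro x p hx hlim
      have hw : Filter.Tendsto (fun n => (x n).1) Filter.atTop (nhds p.1) :=
        (continuous_fst.tendsto p).comp hlim
      have hv : Filter.Tendsto (fun n => (x n).2) Filter.atTop (nhds p.2) :=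
        (continuous_snd.tendsto p).comp hlim
      have hpK : p.1 ∈ K₁ := hK₁closed.mem_of_tendsto hw (Filter.Eventually.of_forall fun n => (hx n).1)
      have hpD : p.2 ∈ D := hDclosed.mem_of_tendsto hv (Filter.Eventually.of_forall fun n => (hx n).2.1)
      obtain ⟨σ, hσ, φ, hφ, hφlim⟩ := (isCompact_Icc (a := (0:ℝ)) (b := 1)).tendsto_subseq
        (x := fun n => s (x n).1 (x n).2) (fun n => by
          obtain ⟨a, b, c, d⟩ := hx n
          exact ⟨(h1 _ a c _ b).1.le, d⟩)
      have hw' := hw.comp hφ.tendsto_atTop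
      have hv' := hv.comp hφ.tendsto_atTop
      have hmle : m ≤ σ * ‖p.1‖ := by
        refine ge_of_tendsto (hφlim.mul hw'.norm) (Filter.Eventually.of_forall fun n => ?_)
        obtain ⟨a, b, c, d⟩ := hx (φ n)
        exact (hnorm _ a c _ b).1.le
      have hσ0 : 0 < σ := by
        rcases hσ.1.eq_or_lt with h | h
        · rw [← h, zero_mul] at hmle; linarith
        · exact h
      have hp0 : p.1 ≠ 0 := by
        intro h
        rw [h, norm_zero, mul_zero] at hmle; linarith
      have hzero : F (T₁ (σ • p.1) p.2) (σ • p.1) = 0 := by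
        have hc := hG (σ • p.1, p.2) ⟨hK₁cone σ hσ0.le _ hpK, hpD⟩
        have ht := Filter.Tendsto.comp hc (tendsto_nhdsWithin_iff.mpr
          ⟨(hφlim.smul hw').prodMk_nhds hv', Filter.Eventually.of_forall fun n => by
            obtain ⟨a, b, c, d⟩ := hx (φ n)
            exact ⟨hK₁cone _ (h1 _ a c _ b).1.le _ a, b⟩⟩)
        refine tendsto_nhds_unique ht (tendsto_const_nhds.congr fun n => ?_)
        obtain ⟨a, b, c, d⟩ := hx (φ n)
        exact (h1 _ a c _ b).2.1.symm
      refine ⟨hpK, hpD, hp0, ?_⟩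
      rw [← (h1 _ hpK hp0 _ hpD).2.2 σ hσ0 hzero]
      exact hσ.2
    · ext ⟨w, v⟩
      constructor
      · rintro ⟨l, hl0, hl1, ⟨u, v'⟩, ⟨hu, hu0, hv, hs⟩, heq⟩
        obtain ⟨rfl, rfl⟩ := Prod.mk.inj heq
        refine ⟨?_, hK₁cone l hl0 u hu, hv⟩
        rintro ⟨-, -, hne, hle⟩
        have hlpos : 0 < l := lt_of_le_of_ne hl0 (fun h => hne (by simp [← h]))
        have hle' : s (l • u) v ≤ 1 := hle
        have hs' : s u v = 1 := hs
        rw [hscale u hu hu0 v hv l hlpos, hs', div_le_one hlpos] at hle'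
        linarith
      · rintro ⟨hnot, hwK, hvD⟩
        have key : ∀ u ∈ K₁, u ≠ 0 → (s u v • u, v) ∈ nehariUb K₁ D s := by
          intro u hu hu0
          have hp := (h1 u hu hu0 v hvD).1
          refine ⟨hK₁cone _ hp.le u hu, smul_ne_zero hp.ne' hu0, hvD, ?_⟩
          change s (s u v • u) v = 1
          rw [hscale u hu hu0 v hvD _ hp, div_self hp.ne']
        by_cases hw0 : w = 0
        · obtain ⟨u, hu, hu0⟩ := hK₁nondeg
          exact ⟨0, le_rfl, one_pos, _, key u hu hu0, by simp [hw0]⟩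
        · have h1s : 1 < s w v := by
            by_contra h
            exact hnot ⟨hwK, hvD, hw0, not_lt.mp h⟩
          have hp : 0 < s w v := by linarith
          refine ⟨(s w v)⁻¹, (inv_pos.mpr hp).le, inv_lt_one_of_one_lt₀ h1s, _, key w hwK hw0, ?_⟩
          simp [smul_smul, inv_mul_cancel₀ hp.ne']
  · refine ((Metric.isBounded_closedBall (x := (0 : X₁)) (r := M)).prod hDbdd).subset ?_
    rintro _ ⟨l, hl0, hl1, ⟨u, v⟩, ⟨hu, hu0, hv, hs⟩, rfl⟩
    refine ⟨?_, hv⟩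
    have h := (hnorm u hu hu0 v hv).2
    have hs' : s u v = 1 := hs
    rw [hs', one_mul] at h
    rw [mem_closedBall_zero_iff, norm_smul, Real.norm_of_nonneg hl0]
    have := norm_nonneg u
    change l * ‖u‖ ≤ M
    nlinarith
end

section
/- Under assumptions (h1) and (h2), the boundary of U relative to the subspace topology of K₁ × D equals U_b, i.e. ∂U = U_b. -/
theorem continuous_of_closed_graph_aux {X Y : Type*} [TopologicalSpace X] [TopologicalSpace Y]
    [CompactSpace Y] (f : X → Y) (h : IsClosed {q : X × Y | q.2 = f q.1}) : Continuous f := by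
  rw [continuous_iff_isClosed]
  intro C hC
  have := isClosedMap_fst_of_compactSpace _ (h.inter (hC.preimage continuous_snd))
  convert this using 1
  ext x
  constructor
  · intro hx
    exact ⟨(x, f x), ⟨rfl, hx⟩, rfl⟩
  · rintro ⟨⟨a, b⟩, ⟨hb, hc⟩, rfl⟩
    simp only [Set.mem_ofPred_eq] at hb
    subst hb
    exact hc

theorem nehariU_frontier_eq_Ub
    {X₁ X₂ : Type*}
    [NormedAddCommGroup X₁] [NormedSpace ℝ X₁] [CompleteSpace X₁]
    [NormedAddCommGroup X₂] [NormedSpace ℝ X₂] [CompleteSpace X₂]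
    -- K₁ is a non-degenerate cone
    (K₁ : Set X₁) (hK₁closed : IsClosed K₁) (hK₁conv : Convex ℝ K₁)
    (hK₁cone : ∀ lam : ℝ, 0 ≤ lam → ∀ u ∈ K₁, lam • u ∈ K₁)
    (hK₁nondeg : ∃ u ∈ K₁, u ≠ 0)
    -- D is nonempty, bounded, closed, convex
    (D : Set X₂) (hDne : D.Nonempty) (hDbdd : Bornology.IsBounded D)
    (hDclosed : IsClosed D) (hDconv : Convex ℝ D)
    -- the operator T₁ : K₁ × D → K₁ is continuous
    (T₁ : X₁ → X₂ → X₁) (hT₁maps : ∀ u ∈ K₁, ∀ v ∈ D, T₁ u v ∈ K₁)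
    (hT₁cont : ContinuousOn (fun p : X₁ × X₂ => T₁ p.1 p.2) (K₁ ×ˢ D))
    -- the functional 𝓕 : K₁ × K₁ → ℝ, continuous, with 𝓕(λu,u)=0 ↔ λ=1
    (F : X₁ → X₁ → ℝ)
    (hFcont : ContinuousOn (fun p : X₁ × X₁ => F p.1 p.2) (K₁ ×ˢ K₁))
    (hF : ∀ u ∈ K₁, u ≠ 0 → ∀ lam : ℝ, 0 < lam → (F (lam • u) u = 0 ↔ lam = 1))
    -- condition (h1): s(u,v) is the unique positive zero
    (s : X₁ → X₂ → ℝ)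
    (h1 : ∀ u ∈ K₁, u ≠ 0 → ∀ v ∈ D,
      0 < s u v ∧ F (T₁ (s u v • u) v) (s u v • u) = 0 ∧
      ∀ σ : ℝ, 0 < σ → F (T₁ (σ • u) v) (σ • u) = 0 → σ = s u v)
    -- condition (h2): m < s < M on the unit sphere of the cone, times D
    (m M : ℝ) (hm : 0 < m) (hmM : m < M)
    (h2 : ∀ u ∈ K₁, ‖u‖ = 1 → ∀ v ∈ D, m < s u v ∧ s u v < M) :
    frontier {p : ↥(K₁ ×ˢ D) | (p : X₁ × X₂) ∈ nehariU K₁ D s} =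
      {p : ↥(K₁ ×ˢ D) | (p : X₁ × X₂) ∈ nehariUb K₁ D s} := by
  classical
  -- homogeneity
  have hhom : ∀ u ∈ K₁, u ≠ 0 → ∀ v ∈ D, ∀ c : ℝ, 0 < c → s (c • u) v = s u v / c := by
    intro u hu hu0 v hv c hc
    obtain ⟨hs, hz, -⟩ := h1 u hu hu0 v hv
    obtain ⟨-, -, huniq⟩ := h1 (c • u) (hK₁cone c hc.le u hu) (smul_ne_zero hc.ne' hu0) v hv
    have e : (s u v / c) • c • u = s u v • u := by
      rw [smul_smul, div_mul_cancel₀ _ hc.ne']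
    exact (huniq _ (div_pos hs hc) (by rw [e]; exact hz)).symm
  have hbd : ∀ u ∈ K₁, u ≠ 0 → ∀ v ∈ D, m < ‖u‖ * s u v ∧ ‖u‖ * s u v < M := by
    intro u hu hu0 v hv
    have hn : 0 < ‖u‖ := norm_pos_iff.2 hu0
    have := h2 (‖u‖⁻¹ • u) (hK₁cone _ (inv_pos.2 hn).le u hu)
      (by rw [norm_smul, norm_inv, norm_norm, inv_mul_cancel₀ hn.ne']) v hv
    rw [hhom u hu hu0 v hv _ (inv_pos.2 hn), div_inv_eq_mul, mul_comm] at this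
    exact this
  let φ : ↥(K₁ ×ˢ D) → ℝ := fun p => if p.1.1 = 0 then 0 else (s p.1.1 p.1.2)⁻¹
  have hφ : Continuous φ := by
    let r : {p : ↥(K₁ ×ˢ D) // p.1.1 ≠ 0} → Set.Icc m M := fun z =>
      ⟨‖z.1.1.1‖ * s z.1.1.1 z.1.1.2,
        (hbd _ z.1.2.1 z.2 _ z.1.2.2).1.le, (hbd _ z.1.2.1 z.2 _ z.1.2.2).2.le⟩
    have hr : Continuous r := by
      apply continuous_of_closed_graph_aux
      let a : {p : ↥(K₁ ×ˢ D) // p.1.1 ≠ 0} × Set.Icc m M → X₁ := fun q =>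
        ((q.2 : ℝ) / ‖q.1.1.1.1‖) • q.1.1.1.1
      have ha : Continuous a := by
        have : Continuous fun q : {p : ↥(K₁ ×ˢ D) // p.1.1 ≠ 0} × Set.Icc m M =>
            ((q.2 : ℝ) / ‖q.1.1.1.1‖) := by
          apply Continuous.div (by fun_prop) (by fun_prop)
          intro q
          exact norm_ne_zero_iff.2 q.1.2
        exact this.smul (by fun_prop)
      have haK : ∀ q, a q ∈ K₁ := fun q =>
        hK₁cone _ (div_nonneg (hm.le.trans q.2.2.1) (norm_nonneg _)) _ q.1.1.2.1
      have hT : Continuous fun q => T₁ (a q) q.1.1.1.2 :=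
        hT₁cont.comp_continuous (f := fun q => (a q, q.1.1.1.2)) (by fun_prop)
          (fun q => ⟨haK q, q.1.1.2.2⟩)
      have hG : Continuous fun q => F (T₁ (a q) q.1.1.1.2) (a q) :=
        hFcont.comp_continuous (f := fun q => (T₁ (a q) q.1.1.1.2, a q)) (hT.prodMk ha)
          (fun q => ⟨hT₁maps _ (haK q) _ q.1.1.2.2, haK q⟩)
      convert isClosed_eq hG continuous_const using 1
      ext q
      have hn : 0 < ‖q.1.1.1.1‖ := norm_pos_iff.2 q.1.2
      obtain ⟨hs, hz, huniq⟩ := h1 q.1.1.1.1 q.1.1.2.1 q.1.2 q.1.1.1.2 q.1.1.2.2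
      simp only [Set.mem_ofPred_eq]
      rw [Subtype.ext_iff]
      change (q.2 : ℝ) = ‖q.1.1.1.1‖ * s q.1.1.1.1 q.1.1.1.2 ↔
        F (T₁ (((q.2 : ℝ) / ‖q.1.1.1.1‖) • q.1.1.1.1) q.1.1.1.2)
          (((q.2 : ℝ) / ‖q.1.1.1.1‖) • q.1.1.1.1) = 0
      constructor
      · intro h
        rw [h, mul_div_cancel_left₀ _ hn.ne']
        exact hz
      · intro h
        rw [← huniq _ (div_pos (hm.trans_le q.2.2.1) hn) h, mul_div_cancel₀ _ hn.ne']
    have hopen : IsOpen {p : ↥(K₁ ×ˢ D) | p.1.1 ≠ 0} :=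
      isOpen_ne_fun (by fun_prop) continuous_const
    have hon : ContinuousOn φ {p : ↥(K₁ ×ˢ D) | p.1.1 ≠ 0} := by
      rw [continuousOn_iff_continuous_domRestrict]
      have : Continuous fun z : {p : ↥(K₁ ×ˢ D) // p.1.1 ≠ 0} => ‖z.1.1.1‖ / (r z : ℝ) := by
        apply Continuous.div (by fun_prop) (by fun_prop)
        intro z
        exact (hm.trans_le (r z).2.1).ne'
      refine this.congr fun z => Eq.symm ?_
      have hz : z.1.1.1 ≠ 0 := z.2
      have hn : 0 < ‖z.1.1.1‖ := norm_pos_iff.2 hz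
      change (if z.1.1.1 = 0 then 0 else (s z.1.1.1 z.1.1.2)⁻¹) =
        ‖z.1.1.1‖ / (‖z.1.1.1‖ * s z.1.1.1 z.1.1.2)
      rw [if_neg hz, div_mul_cancel_left₀ hn.ne']
    rw [continuous_iff_continuousAt]
    intro p
    by_cases hp : p.1.1 = 0
    · have hp0 : φ p = 0 := if_pos hp
      rw [ContinuousAt, hp0]
      have hlim : Filter.Tendsto (fun q : ↥(K₁ ×ˢ D) => ‖q.1.1‖ / m) (nhds p) (nhds 0) := by
        have : Continuous (fun q : ↥(K₁ ×ˢ D) => ‖q.1.1‖ / m) := by fun_prop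
        simpa [hp] using this.tendsto p
      refine squeeze_zero (fun q => ?_) (fun q => ?_) hlim
      · by_cases hq : q.1.1 = 0
        · exact (if_pos hq).ge
        · have : φ q = (s q.1.1 q.1.2)⁻¹ := if_neg hq
          rw [this]
          exact (inv_pos.2 (h1 _ q.2.1 hq _ q.2.2).1).le
      · by_cases hq : q.1.1 = 0
        · have : φ q = 0 := if_pos hq
          rw [this]
          positivity
        · have : φ q = (s q.1.1 q.1.2)⁻¹ := if_neg hq
          have hs := (h1 _ q.2.1 hq _ q.2.2).1
          rw [this, inv_eq_one_div, div_le_div_iff₀ hs hm]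
          linarith [(hbd _ q.2.1 hq _ q.2.2).1]
    · exact hon.continuousAt (hopen.mem_nhds hp)
  have hUb : ∀ p : ↥(K₁ ×ˢ D), (p : X₁ × X₂) ∈ nehariUb K₁ D s ↔ φ p = 1 := by
    intro p
    by_cases hp : p.1.1 = 0
    · have : φ p = 0 := if_pos hp
      simp [nehariUb, this, hp]
    · have : φ p = (s p.1.1 p.1.2)⁻¹ := if_neg hp
      rw [this, inv_eq_one]
      exact ⟨fun h => h.2.2.2, fun h => ⟨p.2.1, hp, p.2.2, h⟩⟩
  have hmk : ∀ u ∈ K₁, u ≠ 0 → ∀ v ∈ D, (s u v • u, v) ∈ nehariUb K₁ D s := by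
    intro u hu hu0 v hv
    have hs := (h1 u hu hu0 v hv).1
    refine ⟨hK₁cone _ hs.le u hu, smul_ne_zero hs.ne' hu0, hv, ?_⟩
    change s (s u v • u) v = 1
    rw [hhom u hu hu0 v hv _ hs, div_self hs.ne']
  have hU : ∀ p : ↥(K₁ ×ˢ D), (p : X₁ × X₂) ∈ nehariU K₁ D s ↔ φ p < 1 := by
    intro p
    by_cases hp : p.1.1 = 0
    · have : φ p = 0 := if_pos hp
      rw [this]
      refine ⟨fun _ => one_pos, fun _ => ?_⟩
      obtain ⟨w, hw, hw0⟩ := hK₁nondeg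
      exact ⟨0, le_rfl, one_pos, _, hmk w hw hw0 _ p.2.2, Prod.ext (by simp [hp]) rfl⟩
    · have : φ p = (s p.1.1 p.1.2)⁻¹ := if_neg hp
      have hs := (h1 _ p.2.1 hp _ p.2.2).1
      rw [this]
      constructor
      · rintro ⟨c, hc0, hc1, w, ⟨hwK, hw0, hwD, hw1⟩, he⟩
        have hcp : 0 < c := by
          rcases hc0.eq_or_lt with h | h
          · exact absurd (by rw [he, ← h]; simp) hp
          · exact h
        rw [he]
        change (s (c • w.1) w.2)⁻¹ < 1
        rw [hhom _ hwK hw0 _ hwD c hcp, hw1]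
        simpa using hc1
      · intro h
        refine ⟨_, (inv_pos.2 hs).le, h, _, hmk _ p.2.1 hp _ p.2.2, Prod.ext ?_ rfl⟩
        change _ = (s p.1.1 p.1.2)⁻¹ • s p.1.1 p.1.2 • p.1.1
        rw [smul_smul, inv_mul_cancel₀ hs.ne', one_smul]
  simp only [hU, hUb]
  apply Set.Subset.antisymm
  · exact frontier_lt_subset_eq hφ continuous_const
  · intro p hp
    have hp1 : φ p = 1 := hp
    have hpU := (hUb p).2 hp1
    rw [(isOpen_lt hφ continuous_const).frontier_eq]
    refine ⟨?_, fun h => (lt_irrefl (1 : ℝ)) (hp1 ▸ h)⟩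
    let γ : Set.Icc (0 : ℝ) 1 → ↥(K₁ ×ˢ D) := fun t =>
      ⟨((t : ℝ) • p.1.1, p.1.2), hK₁cone _ t.2.1 _ p.2.1, p.2.2⟩
    have hγ : Continuous γ := by
      apply Continuous.subtype_mk
      fun_prop
    let τ : ℕ → Set.Icc (0 : ℝ) 1 := fun n =>
      ⟨1 - 1 / ((n : ℝ) + 1), by
        have : 1 / ((n : ℝ) + 1) ≤ 1 := by
          rw [div_le_one (by positivity)]
          linarith [(Nat.cast_nonneg n : (0 : ℝ) ≤ n)]
        linarith, by
        have : 0 < 1 / ((n : ℝ) + 1) := by positivity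
        linarith⟩
    have hτ : Filter.Tendsto τ Filter.atTop (nhds ⟨1, by simp⟩) := by
      rw [tendsto_subtype_rng]
      have := (tendsto_one_div_add_atTop_nhds_zero_nat (𝕜 := ℝ)).const_sub 1
      rw [sub_zero] at this
      exact this
    have hlim := (hγ.tendsto ⟨1, by simp⟩).comp hτ
    have hγ1 : γ ⟨1, by simp⟩ = p := Subtype.ext (Prod.ext (one_smul _ _) rfl)
    rw [hγ1] at hlim
    refine mem_closure_of_tendsto hlim (Filter.Eventually.of_forall fun n => ?_)
    refine (hU _).1 ⟨(τ n : ℝ), (τ n).2.1, ?_, p.1, hpU, rfl⟩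
    have : 0 < 1 / ((n : ℝ) + 1) := by positivity
    change 1 - 1 / ((n : ℝ) + 1) < 1
    linarith
end

section
/- (Nehari–Schauder fixed point theorem.) Assume conditions (h1) and (h2). Then the operator (T₁, T₂) admits a fixed point (u,v) ∈ K₁ × D, i.e. T₁(u,v) = u and T₂(u,v) = v. If, in addition, (T₁, T₂) has no fixed point of the form (0, v̄) with v̄ ∈ D, then the fixed point (u,v) belongs to U_b. -/
namespace NS

set_option linter.unusedSectionVars false

/-- Scarf dominance of a finite set with respect to a family of rankings. -/
def Dom {V I : Type*} (r : I → V → ℕ) (τ : Finset V) : Prop :=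
  ∀ y, ∃ i, ∀ x ∈ τ, r i y ≤ r i x

/-- Points lying strictly above all minima except the `p`-th. -/
def EE {V I : Type*} (r : I → V → ℕ) (a : I → V) (p : I) : Set V :=
  {y | ∀ k, k ≠ p → r k (a k) < r k y}

section
variable {V I : Type*} [Fintype V] [DecidableEq V] [Fintype I] [DecidableEq I]

lemma room_parity (c : V → I) (σ : Finset V) (hσ : σ.card = Fintype.card I) (i0 : I)
    (hno : σ.image c ≠ Finset.univ) :
    Even (σ.filter (fun x => (σ.erase x).image c = Finset.univ.erase i0)).card := by
  classical
  by_cases h : ∃ x ∈ σ, (σ.erase x).image c = Finset.univ.erase i0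
  · obtain ⟨x, hx, hxe⟩ := h
    have hinj : Set.InjOn c (σ.erase x : Finset V) := by
      apply Finset.injOn_of_card_image_eq
      rw [hxe, Finset.card_erase_of_mem hx, Finset.card_erase_of_mem (Finset.mem_univ _), hσ,
        Finset.card_univ]
    have hcx : c x ≠ i0 := by
      intro hc
      apply hno
      rw [← Finset.insert_erase hx, Finset.image_insert, hxe, hc,
        Finset.insert_erase (Finset.mem_univ _)]
    have : c x ∈ (σ.erase x).image c := by rw [hxe]; simp [hcx]
    obtain ⟨x', hx', hcx'⟩ := Finset.mem_image.1 this
    have hne : x' ≠ x := Finset.ne_of_mem_erase hx'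
    have hx'σ : x' ∈ σ := Finset.mem_of_mem_erase hx'
    have key : σ.filter (fun x => (σ.erase x).image c = Finset.univ.erase i0) = {x, x'} := by
      ext z
      simp only [Finset.mem_filter, Finset.mem_insert, Finset.mem_singleton]
      constructor
      · rintro ⟨hz, hze⟩
        by_contra hcon
        push Not at hcon
        have hzx : z ∈ σ.erase x := Finset.mem_erase.2 ⟨hcon.1, hz⟩
        have h1 : c z ∈ (σ.erase z).image c := by
          rw [hze, ← hxe]; exact Finset.mem_image_of_mem _ hzx
        obtain ⟨w, hw, hcw⟩ := Finset.mem_image.1 h1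
        by_cases hwx : w = x
        · subst hwx
          exact hcon.2 (hinj hzx hx' (by rw [hcx', hcw]))
        · exact Finset.ne_of_mem_erase hw
            (hinj (Finset.mem_erase.2 ⟨hwx, Finset.mem_of_mem_erase hw⟩) hzx hcw)
      · rintro (rfl | rfl)
        · exact ⟨hx, hxe⟩
        · refine ⟨hx'σ, ?_⟩
          rw [← hxe]
          ext t
          simp only [Finset.mem_image, Finset.mem_erase]
          constructor
          · rintro ⟨w, ⟨h1, h2⟩, rfl⟩
            by_cases hwx : w = x
            · subst hwx; exact ⟨z, ⟨hne, hx'σ⟩, hcx'⟩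
            · exact ⟨w, ⟨hwx, h2⟩, rfl⟩
          · rintro ⟨w, ⟨h1, h2⟩, rfl⟩
            by_cases hwx : w = z
            · subst hwx; exact ⟨x, ⟨hne.symm, hx⟩, hcx'.symm⟩
            · exact ⟨w, ⟨hwx, h2⟩, rfl⟩
    rw [key, Finset.card_pair hne.symm]
    exact even_two
  · rw [Finset.filter_eq_empty_iff.2]
    · simp
    · intro x hx hh
      exact h ⟨x, hx, hh⟩

lemma exists_argmin (r : I → V → ℕ) (τ : Finset V) (hτ : τ.Nonempty) :
    ∃ a : I → V, ∀ k, a k ∈ τ ∧ ∀ x ∈ τ, r k (a k) ≤ r k x := by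
  choose a ha using fun k => Finset.exists_min_image τ (r k) hτ
  exact ⟨a, ha⟩

open Classical in
lemma door_count (r : I → V → ℕ) (hr : ∀ i, Function.Injective (r i)) (τ : Finset V)
    (hcard : τ.card + 1 = Fintype.card I) (hdom : Dom r τ)
    (a : I → V) (ha : ∀ k, a k ∈ τ ∧ ∀ x ∈ τ, r k (a k) ≤ r k x)
    (i j : I) (hij : i ≠ j) (haij : a i = a j) :
    (Finset.univ.filter (fun x => x ∉ τ ∧ Dom r (insert x τ))).card =
      (if (EE r a i).Nonempty then 1 else 0) + (if (EE r a j).Nonempty then 1 else 0) := by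
  have hsurj : ∀ x ∈ τ, ∃ k, a k = x := by
    intro x hx
    obtain ⟨k, hk⟩ := hdom x
    exact ⟨k, hr k (le_antisymm ((ha k).2 x hx) (hk _ (ha k).1))⟩
  have hnot : ∀ p q, p ≠ q → a p = a q → ∀ x ∈ EE r a p, x ∉ τ := by
    intro p q hpq hapq x hx hxτ
    obtain ⟨k, rfl⟩ := hsurj x hxτ
    by_cases hk : k = p
    · subst hk
      have := hx q hpq.symm
      rw [hapq] at this
      exact lt_irrefl _ this
    · exact lt_irrefl _ (hx k hk)
  have hback : ∀ p x, x ∈ EE r a p → (∀ y ∈ EE r a p, r p y ≤ r p x) → Dom r (insert x τ) := by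
    intro p x hx hmax y
    by_cases hy : y ∈ EE r a p
    · obtain ⟨k, hk⟩ := hdom y
      have hkp : k = p := by
        by_contra hkp
        exact absurd (hy k hkp) (not_lt.2 (hk _ (ha k).1))
      subst hkp
      refine ⟨k, fun z hz => ?_⟩
      rcases Finset.mem_insert.1 hz with rfl | hz
      · exact hmax y hy
      · exact hk z hz
    · simp only [EE, Set.mem_ofPred_eq, not_forall, not_lt] at hy
      obtain ⟨k, hkp, hk⟩ := hy
      refine ⟨k, fun z hz => ?_⟩
      rcases Finset.mem_insert.1 hz with rfl | hz
      · exact hk.trans (hx k hkp).le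
      · exact hk.trans ((ha k).2 z hz)
  have hfwd : ∀ x, x ∉ τ → Dom r (insert x τ) →
      (x ∈ EE r a i ∧ ∀ y ∈ EE r a i, r i y ≤ r i x) ∨
      (x ∈ EE r a j ∧ ∀ y ∈ EE r a j, r j y ≤ r j x) := by
    intro x hx hD
    obtain ⟨b, hb⟩ := exists_argmin r (insert x τ) ⟨x, Finset.mem_insert_self _ _⟩
    have hbs : ∀ z ∈ insert x τ, ∃ k, b k = z := by
      intro z hz
      obtain ⟨k, hk⟩ := hD z
      exact ⟨k, hr k (le_antisymm ((hb k).2 z hz) (hk _ (hb k).1))⟩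
    have hbinj : Function.Injective b := by
      have : Set.InjOn b (Finset.univ : Finset I) := by
        apply Finset.injOn_of_card_image_eq
        have : Finset.univ.image b = insert x τ := by
          ext z
          simp only [Finset.mem_image, Finset.mem_univ, true_and]
          constructor
          · rintro ⟨k, rfl⟩; exact (hb k).1
          · exact hbs z
        rw [this, Finset.card_insert_of_notMem hx, hcard, Finset.card_univ]
      intro k l hkl
      exact this (by simp) (by simp) hkl
    obtain ⟨p, hp⟩ := hbs x (Finset.mem_insert_self _ _)
    have hba : ∀ k, k ≠ p → b k = a k ∧ r k (a k) < r k x := by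
      intro k hk
      have h1 : b k ≠ x := fun h => hk (hbinj (h.trans hp.symm))
      have h2 : b k ∈ τ := Finset.mem_of_mem_insert_of_ne (hb k).1 h1
      have h3 : b k = a k := hr k (le_antisymm
        ((hb k).2 _ (Finset.mem_insert_of_mem (ha k).1)) ((ha k).2 _ h2))
      refine ⟨h3, ?_⟩
      rw [← h3]
      exact lt_of_le_of_ne ((hb k).2 _ (Finset.mem_insert_self _ _)) fun h => h1 (hr k h)
    have hxE : x ∈ EE r a p := fun k hk => (hba k hk).2
    have hmax : ∀ y ∈ EE r a p, r p y ≤ r p x := by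
      intro y hy
      obtain ⟨k, hk⟩ := hD y
      have hkp : k = p := by
        by_contra hkp
        exact absurd (hy k hkp) (not_lt.2 (hk _ (Finset.mem_insert_of_mem (ha k).1)))
      subst hkp
      exact hk x (Finset.mem_insert_self _ _)
    by_cases hpi : p = i
    · subst hpi; exact Or.inl ⟨hxE, hmax⟩
    · by_cases hpj : p = j
      · subst hpj; exact Or.inr ⟨hxE, hmax⟩
      · exfalso
        apply hij
        apply hbinj
        rw [(hba i (Ne.symm hpi)).1, (hba j (Ne.symm hpj)).1, haij]
  have hone : ∀ p, (Finset.univ.filter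
      (fun x => x ∈ EE r a p ∧ ∀ y ∈ EE r a p, r p y ≤ r p x)).card =
      if (EE r a p).Nonempty then 1 else 0 := by
    intro p
    split_ifs with h
    · obtain ⟨x, hx, hxm⟩ := Set.exists_max_image (EE r a p) (r p) (Set.toFinite _) h
      rw [Finset.card_eq_one]
      refine ⟨x, ?_⟩
      ext z
      simp only [Finset.mem_filter, Finset.mem_univ, true_and, Finset.mem_singleton]
      constructor
      · rintro ⟨h1, h2⟩
        exact hr p (le_antisymm (hxm z h1) (h2 x hx))
      · rintro rfl; exact ⟨hx, hxm⟩
    · rw [Finset.card_eq_zero, Finset.filter_eq_empty_iff]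
      intro x _ hx
      exact h ⟨x, hx.1⟩
  rw [← hone i, ← hone j, ← Finset.card_union_of_disjoint]
  · congr 1
    ext x
    simp only [Finset.mem_filter, Finset.mem_univ, true_and, Finset.mem_union]
    constructor
    · rintro ⟨h1, h2⟩; exact hfwd x h1 h2
    · rintro (⟨h1, h2⟩ | ⟨h1, h2⟩)
      · exact ⟨hnot i j hij haij x h1, hback i x h1 h2⟩
      · exact ⟨hnot j i hij.symm haij.symm x h1, hback j x h1 h2⟩
  · rw [Finset.disjoint_left]
    intro x hx hx'
    simp only [Finset.mem_filter, Finset.mem_univ, true_and] at hx hx'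
    obtain ⟨k, hk⟩ := hdom x
    have hk' := hk _ (ha k).1
    by_cases hki : k = i
    · exact absurd (hx'.1 k (by rw [hki]; exact hij)) (not_lt.2 hk')
    · exact absurd (hx.1 k hki) (not_lt.2 hk')

open Classical in
theorem scarf [Nontrivial I] (r : I → V → ℕ) (hr : ∀ i, Function.Injective (r i))
    (s : I → V) (hs : Function.Injective s)
    (hlow : ∀ i x, r i (s i) ≤ r i x)
    (hhigh : ∀ i j, i ≠ j → ∀ x, x ∉ Set.range s → r i x < r i (s j))
    (y0 : V) (hy0 : y0 ∉ Set.range s)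
    (c : V → I) (hc : ∀ i, c (s i) = i) :
    ∃ σ : Finset V, (∀ i, ∃ x ∈ σ, c x = i) ∧ Dom r σ := by
  by_contra hcon
  obtain ⟨i0⟩ : Nonempty I := inferInstance
  have hcardI : 1 < Fintype.card I := Fintype.one_lt_card
  set Rm : Finset (Finset V) := Finset.univ.filter (fun σ => σ.card = Fintype.card I ∧ Dom r σ)
    with hRm
  set Dr : Finset (Finset V) := Finset.univ.filter (fun τ => τ.card + 1 = Fintype.card I ∧ Dom r τ
    ∧ τ.image c = Finset.univ.erase i0) with hDr
  have hlow' : ∀ i x, x ≠ s i → r i (s i) < r i x := fun i x hx =>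
    lt_of_le_of_ne (hlow i x) fun h => hx (hr i h).symm
  -- double counting
  have hcount : ∑ τ ∈ Dr, (Finset.univ.filter (fun x => x ∉ τ ∧ Dom r (insert x τ))).card =
      ∑ σ ∈ Rm, (σ.filter (fun x => (σ.erase x).image c = Finset.univ.erase i0)).card := by
    rw [← Finset.card_sigma, ← Finset.card_sigma]
    refine Finset.card_bij' (fun p _ => (⟨insert p.2 p.1, p.2⟩ : (_ : Finset V) × V))
      (fun p _ => (⟨p.1.erase p.2, p.2⟩ : (_ : Finset V) × V)) ?_ ?_ ?_ ?_
    · rintro ⟨τ, x⟩ h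
      simp only [hDr, hRm, Finset.mem_sigma, Finset.mem_filter, Finset.mem_univ, true_and] at h ⊢
      obtain ⟨⟨h1, h2, h3⟩, h4, h5⟩ := h
      refine ⟨⟨?_, h5⟩, Finset.mem_insert_self _ _, ?_⟩
      · rw [Finset.card_insert_of_notMem h4, h1]
      · rw [Finset.erase_insert h4, h3]
    · rintro ⟨σ, x⟩ h
      simp only [hDr, hRm, Finset.mem_sigma, Finset.mem_filter, Finset.mem_univ, true_and] at h ⊢
      obtain ⟨⟨h1, h2⟩, h3, h4⟩ := h
      refine ⟨⟨?_, ?_, h4⟩, Finset.notMem_erase _ _, ?_⟩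
      · rw [Finset.card_erase_add_one h3, h1]
      · intro y
        obtain ⟨k, hk⟩ := h2 y
        exact ⟨k, fun z hz => hk z (Finset.mem_of_mem_erase hz)⟩
      · rw [Finset.insert_erase h3]; exact h2
    · rintro ⟨τ, x⟩ h
      simp only [hDr, Finset.mem_sigma, Finset.mem_filter, Finset.mem_univ, true_and] at h
      simp [Finset.erase_insert h.2.1]
    · rintro ⟨σ, x⟩ h
      simp only [hRm, Finset.mem_sigma, Finset.mem_filter, Finset.mem_univ, true_and] at h
      simp [Finset.insert_erase h.2.1]
  have heven : Even (∑ σ ∈ Rm,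
      (σ.filter (fun x => (σ.erase x).image c = Finset.univ.erase i0)).card) := by
    apply Finset.even_sum
    intro σ hσ
    simp only [hRm, Finset.mem_filter, Finset.mem_univ, true_and] at hσ
    apply room_parity c σ hσ.1 i0
    intro him
    apply hcon
    refine ⟨σ, fun i => ?_, hσ.2⟩
    have : i ∈ σ.image c := by rw [him]; simp
    simpa using this
  -- the special door
  set S0 : Finset V := (Finset.univ.erase i0).image s with hS0
  have hS0mem : ∀ x, x ∈ S0 ↔ ∃ l, l ≠ i0 ∧ s l = x := by
    intro x; simp [hS0]
  have hS0card : S0.card + 1 = Fintype.card I := by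
    rw [hS0, Finset.card_image_of_injective _ hs, Finset.card_erase_add_one (Finset.mem_univ _),
      Finset.card_univ]
  have hS0dom : Dom r S0 := by
    intro y
    by_cases hy : y ∈ Set.range s
    · obtain ⟨l, rfl⟩ := hy
      exact ⟨l, fun x _ => hlow l x⟩
    · refine ⟨i0, fun x hx => ?_⟩
      obtain ⟨l, hl, rfl⟩ := (hS0mem x).1 hx
      exact (hhigh i0 l hl.symm y hy).le
  have hS0Dr : S0 ∈ Dr := by
    simp only [hDr, Finset.mem_filter, Finset.mem_univ, true_and]
    refine ⟨hS0card, hS0dom, ?_⟩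
    rw [hS0, Finset.image_image]
    have : c ∘ s = id := funext hc
    rw [this, Finset.image_id]
  have hcount0 : (Finset.univ.filter (fun x => x ∉ S0 ∧ Dom r (insert x S0))).card = 1 := by
    obtain ⟨a, ha⟩ := exists_argmin r S0 (Finset.card_pos.1 (by omega))
    have hal : ∀ l, l ≠ i0 → a l = s l := by
      intro l hl
      exact hr l (le_antisymm ((ha l).2 _ ((hS0mem _).2 ⟨l, hl, rfl⟩)) (hlow l _))
    obtain ⟨q, hq, haq⟩ := (hS0mem _).1 (ha i0).1
    rw [door_count r hr S0 hS0card hS0dom a ha i0 q hq.symm (by rw [hal q hq, haq])]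
    rw [if_pos, if_neg]
    · rintro ⟨y, hy⟩
      have h0 := hy i0 hq.symm
      rw [← haq] at h0
      by_cases hys : y ∈ Set.range s
      · obtain ⟨l, rfl⟩ := hys
        by_cases hlq : l = q
        · subst hlq; exact lt_irrefl _ h0
        · by_cases hl0 : l = i0
          · subst hl0; exact absurd h0 (not_lt.2 (hlow _ _))
          · have := hy l hlq
            rw [hal l hl0] at this
            exact lt_irrefl _ this
      · exact absurd h0 (not_lt.2 (hhigh i0 q hq.symm y hys).le)
    · refine ⟨y0, fun k hk => ?_⟩
      rw [hal k hk]
      exact hlow' k y0 fun h => hy0 ⟨k, h.symm⟩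
  have hother : ∀ τ ∈ Dr.erase S0,
      Even (Finset.univ.filter (fun x => x ∉ τ ∧ Dom r (insert x τ))).card := by
    intro τ hτ
    obtain ⟨hne, hτ⟩ := Finset.mem_erase.1 hτ
    simp only [hDr, Finset.mem_filter, Finset.mem_univ, true_and] at hτ
    obtain ⟨h1, h2, h3⟩ := hτ
    obtain ⟨a, ha⟩ := exists_argmin r τ (Finset.card_pos.1 (by omega))
    obtain ⟨i, -, j, -, hij, haij⟩ := Finset.exists_ne_map_eq_of_card_lt_of_maps_to
      (s := (Finset.univ : Finset I)) (t := τ) (f := a) (by rw [Finset.card_univ]; omega)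
      (fun k _ => (ha k).1)
    have hE : ∀ p, (EE r a p).Nonempty := by
      intro p
      by_contra hemp
      have hp : s p ∉ EE r a p := fun h => hemp ⟨_, h⟩
      simp only [EE, Set.mem_ofPred_eq, not_forall, not_lt] at hp
      obtain ⟨k, hkp, hk⟩ := hp
      have hz : ∀ z ∈ τ, ∃ l, l ≠ k ∧ s l = z := by
        intro z hz
        have hz1 : r k (s p) ≤ r k z := hk.trans ((ha k).2 z hz)
        by_cases hzs : z ∈ Set.range s
        · obtain ⟨l, rfl⟩ := hzs
          refine ⟨l, ?_, rfl⟩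
          rintro rfl
          exact absurd (hlow' l (s p) fun h => hkp (hs h).symm) (not_lt.2 hz1)
        · exact absurd (hhigh k p hkp z hzs) (not_lt.2 hz1)
      have hsub : τ ⊆ (Finset.univ.erase k).image s := by
        intro z hz'
        obtain ⟨l, hl, rfl⟩ := hz z hz'
        exact Finset.mem_image_of_mem _ (by simp [hl])
      have heq : τ = (Finset.univ.erase k).image s := by
        apply Finset.eq_of_subset_of_card_le hsub
        rw [Finset.card_image_of_injective _ hs, Finset.card_erase_of_mem (Finset.mem_univ _),
          Finset.card_univ]
        omega
      have : Finset.univ.erase k = Finset.univ.erase i0 := by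
        rw [← h3, heq, Finset.image_image]
        have : c ∘ s = id := funext hc
        rw [this, Finset.image_id]
      apply hne
      rw [heq, this]
    rw [door_count r hr τ h1 h2 a ha i j hij haij, if_pos (hE i), if_pos (hE j)]
    exact even_two
  rw [← hcount, ← Finset.add_sum_erase _ _ hS0Dr, hcount0] at heven
  have := Finset.even_sum _ hother
  rw [Nat.even_add] at heven
  exact absurd (heven.2 this) (by decide)
end

section grid
variable {I : Type*} [Fintype I] [DecidableEq I]

/-- Integer points of the `N`-th dilate of the standard simplex. -/
abbrev Gr (I : Type*) [Fintype I] (N : ℕ) : Type _ :=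
  {x : I → Fin (N + 1) // ∑ i, (x i : ℕ) = N}

lemma grid_mk (N : ℕ) (f : I → ℕ) (hf : ∑ i, f i = N) :
    ∃ y : Gr I N, ∀ i, (y.1 i : ℕ) = f i := by
  have hb : ∀ i, f i < N + 1 := by
    intro i
    have := Finset.single_le_sum (f := f) (fun _ _ => Nat.zero_le _) (Finset.mem_univ i)
    omega
  exact ⟨⟨fun i => ⟨f i, hb i⟩, hf⟩, fun i => rfl⟩

lemma grid_lemma [Nontrivial I] (N : ℕ) (c : Gr I N → I) :
    ∃ σ : Finset (Gr I N), σ.Nonempty ∧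
      (∀ x ∈ σ, ∀ x' ∈ σ, ∀ i, (x.1 i : ℕ) ≤ x'.1 i + Fintype.card I) ∧
      ∀ i, (∃ x ∈ σ, c x = i) ∨ ∀ x ∈ σ, (x.1 i : ℕ) ≤ Fintype.card I := by
  classical
  set K := Fintype.card (Gr I N) with hK
  let e : Gr I N ≃ Fin K := Fintype.equivFin _
  let e' : I ≃ Fin (Fintype.card I) := Fintype.equivFin _
  let r : I → I ⊕ Gr I N → ℕ := fun i =>
    Sum.elim (fun j => if j = i then 0 else 1 + (N + 1) * K + (e' j : ℕ))
      (fun x => 1 + ((x.1 i : ℕ) * K + (e x : ℕ)))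
  have hbound : ∀ i (x : Gr I N), (x.1 i : ℕ) * K + (e x : ℕ) < (N + 1) * K := by
    intro i x
    have h1 : (x.1 i : ℕ) + 1 ≤ N + 1 := (x.1 i).2
    have h2 := (e x).2
    calc (x.1 i : ℕ) * K + (e x : ℕ) < (x.1 i : ℕ) * K + K := by omega
      _ = ((x.1 i : ℕ) + 1) * K := by ring
      _ ≤ (N + 1) * K := Nat.mul_le_mul_right _ h1
  have hmono : ∀ i (x y : Gr I N), (x.1 i : ℕ) * K + (e x : ℕ) ≤ (y.1 i : ℕ) * K + (e y : ℕ) →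
      (x.1 i : ℕ) ≤ y.1 i := by
    intro i x y h
    by_contra hlt
    push Not at hlt
    have h1 : ((y.1 i : ℕ) + 1) * K ≤ (x.1 i : ℕ) * K := Nat.mul_le_mul_right _ hlt
    have h2 := (e y).2
    have h3 : ((y.1 i : ℕ) + 1) * K = (y.1 i : ℕ) * K + K := by ring
    omega
  have hr : ∀ i, Function.Injective (r i) := by
    rintro i (j | x) (j' | x') h
    · simp only [r, Sum.elim_inl] at h
      split_ifs at h with h1 h2 h2
      · rw [h1, h2]
      · omega
      · omega
      · congr 1
        apply e'.injective
        apply Fin.ext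
        omega
    · simp only [r, Sum.elim_inl, Sum.elim_inr] at h
      have := hbound i x'
      split_ifs at h <;> omega
    · simp only [r, Sum.elim_inl, Sum.elim_inr] at h
      have := hbound i x
      split_ifs at h <;> omega
    · simp only [r, Sum.elim_inr] at h
      have h1 := hmono i x x' (by omega)
      have h2 := hmono i x' x (by omega)
      have h3 : (x.1 i : ℕ) = x'.1 i := le_antisymm h1 h2
      rw [h3] at h
      congr 1
      apply e.injective
      apply Fin.ext
      omega
  obtain ⟨i1⟩ : Nonempty I := inferInstance
  obtain ⟨y0, -⟩ := grid_mk (I := I) N (fun i => if i = i1 then N else 0) (by simp)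
  obtain ⟨σ', hcol, hdom⟩ := scarf r hr Sum.inl Sum.inl_injective
    (by intro i x; simp [r])
    (by
      rintro i j hij (k | x) hx
      · exact absurd ⟨k, rfl⟩ hx
      · have := hbound i x
        simp only [r, Sum.elim_inl, Sum.elim_inr, if_neg hij.symm]
        omega)
    (Sum.inr y0) (by simp) (Sum.elim id c) (by simp)
  set J : Finset I := Finset.univ.filter (fun i => Sum.inl i ∉ σ') with hJ
  set σ : Finset (Gr I N) := Finset.univ.filter (fun x => Sum.inr x ∈ σ') with hσ
  have hD : ∀ y : Gr I N, ∃ i ∈ J, ∀ x ∈ σ, (y.1 i : ℕ) ≤ x.1 i := by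
    intro y
    obtain ⟨i, hi⟩ := hdom (Sum.inr y)
    refine ⟨i, ?_, ?_⟩
    · simp only [hJ, Finset.mem_filter, Finset.mem_univ, true_and]
      intro h
      have := hi _ h
      simp [r] at this
    · intro x hx
      simp only [hσ, Finset.mem_filter, Finset.mem_univ, true_and] at hx
      have := hi _ hx
      simp only [r, Sum.elim_inr] at this
      exact hmono i y x (by omega)
  have hcolJ : ∀ i ∈ J, ∃ x ∈ σ, c x = i := by
    intro i hi
    simp only [hJ, Finset.mem_filter, Finset.mem_univ, true_and] at hi
    obtain ⟨z | x, hx, hcx⟩ := hcol i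
    · simp only [Sum.elim_inl, id] at hcx
      subst hcx
      exact absurd hx hi
    · exact ⟨x, by simpa [hσ] using hx, by simpa using hcx⟩
  obtain ⟨j, hj, -⟩ := hD y0
  have hσne : σ.Nonempty := by
    obtain ⟨x, hx, -⟩ := hcolJ j hj
    exact ⟨x, hx⟩
  choose a ha hamin using fun i : I =>
    Finset.exists_min_image σ (fun x : Gr I N => (x.1 i : ℕ)) hσne
  set m : I → ℕ := fun i => ((a i).1 i : ℕ) with hm
  have hsum : N < ∑ i ∈ J, (m i + 1) := by
    by_contra hle
    push Not at hle
    obtain ⟨y, hy⟩ := grid_mk (I := I) N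
      (fun i => (if i ∈ J then m i + 1 else 0) +
        (if i = j then N - ∑ i ∈ J, (m i + 1) else 0)) (by
        rw [Finset.sum_add_distrib]
        simp only [Finset.sum_ite_mem, Finset.univ_inter, Finset.sum_ite_eq', Finset.mem_univ,
          if_true]
        omega)
    obtain ⟨i, hi, hix⟩ := hD y
    have h1 := hix (a i) (ha i)
    rw [hy i, if_pos hi] at h1
    simp only [hm] at h1
    omega
  have hJc : J.card ≤ Fintype.card I := Finset.card_le_univ J
  rw [Finset.sum_add_distrib, Finset.sum_const, smul_eq_mul, mul_one] at hsum
  have hmx : ∀ x ∈ σ, ∀ i, m i ≤ x.1 i := fun x hx i => hamin i x hx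
  have hin : ∀ x ∈ σ, ∀ i ∈ J, (x.1 i : ℕ) ≤ m i + Fintype.card I := by
    intro x hx i hi
    have h1 : ∑ k ∈ J, (x.1 k : ℕ) ≤ N := 
      (Finset.sum_le_sum_of_subset (Finset.subset_univ _)).trans_eq x.2
    have h2 : ∑ k ∈ J.erase i, m k ≤ ∑ k ∈ J.erase i, (x.1 k : ℕ) :=
      Finset.sum_le_sum fun k _ => hmx x hx k
    have h3 := Finset.add_sum_erase J m hi
    have h4 := Finset.add_sum_erase J (fun k => (x.1 k : ℕ)) hi
    omega
  have hout : ∀ x ∈ σ, ∀ i ∉ J, (x.1 i : ℕ) ≤ Fintype.card I := by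
    intro x hx i hi
    have h1 : ∑ k ∈ insert i J, (x.1 k : ℕ) ≤ N := 
      (Finset.sum_le_sum_of_subset (Finset.subset_univ _)).trans_eq x.2
    rw [Finset.sum_insert hi] at h1
    have h2 : ∑ k ∈ J, m k ≤ ∑ k ∈ J, (x.1 k : ℕ) :=
      Finset.sum_le_sum fun k _ => hmx x hx k
    omega
  refine ⟨σ, hσne, ?_, ?_⟩
  · intro x hx x' hx' i
    by_cases hi : i ∈ J
    · have := hin x hx i hi
      have := hmx x' hx' i
      omega
    · have := hout x hx i hi
      omega
  · intro i
    by_cases hi : i ∈ J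
    · exact Or.inl (hcolJ i hi)
    · exact Or.inr fun x hx => hout x hx i hi

theorem brouwer_simplex [Nonempty I] (f : stdSimplex ℝ I → stdSimplex ℝ I) (hf : Continuous f) :
    ∃ p, f p = p := by
  classical
  rcases subsingleton_or_nontrivial I with hI | hI
  · obtain ⟨i⟩ : Nonempty I := inferInstance
    let p : stdSimplex ℝ I := ⟨Pi.single i 1, single_mem_stdSimplex ℝ i⟩
    have hone : ∀ q : stdSimplex ℝ I, ∀ k, q.1 k = 1 := by
      intro q k
      have := q.2.2
      rwa [Fintype.sum_subsingleton _ k] at this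
    refine ⟨p, Subtype.ext (funext fun k => ?_)⟩
    rw [hone, hone]
  have happrox : ∀ ε : ℝ, 0 < ε → ∃ p : stdSimplex ℝ I, ∀ i, p.1 i ≤ (f p).1 i + ε := by
    intro ε hε
    have huc := CompactSpace.uniformContinuous_of_continuous hf
    obtain ⟨δ, hδ, hfδ⟩ := Metric.uniformContinuous_iff.1 huc (ε / 2) (by positivity)
    obtain ⟨N, hN⟩ := exists_nat_gt ((Fintype.card I : ℝ) / min δ (ε / 2))
    have hmin : 0 < min δ (ε / 2) := by positivity
    have hNpos : (0 : ℝ) < N := lt_of_le_of_lt (by positivity) hN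
    have hnN : (Fintype.card I : ℝ) / N < min δ (ε / 2) := by
      rw [div_lt_iff₀ hmin] at hN
      rw [div_lt_iff₀ hNpos]
      linarith
    have hnδ := lt_of_lt_of_le hnN (min_le_left _ _)
    have hnε := lt_of_lt_of_le hnN (min_le_right _ _)
    let P : Gr I N → stdSimplex ℝ I := fun x => ⟨fun i => ((x.1 i : ℕ) : ℝ) / N, by
      refine ⟨fun i => by positivity, ?_⟩
      rw [← Finset.sum_div, ← Nat.cast_sum, x.2, div_self hNpos.ne']⟩
    have hc : ∀ x : Gr I N, ∃ i, (P x).1 i ≤ (f (P x)).1 i := by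
      intro x
      obtain ⟨i, -, hi⟩ := Finset.exists_le_of_sum_le (s := (Finset.univ : Finset I))
        (f := (P x).1) (g := (f (P x)).1) Finset.univ_nonempty
        (by rw [(P x).2.2, (f (P x)).2.2])
      exact ⟨i, hi⟩
    choose c hc using hc
    obtain ⟨σ, ⟨x, hx⟩, hclose, hcol⟩ := grid_lemma N c
    have hcl : ∀ x ∈ σ, ∀ z ∈ σ, ∀ i, (P x).1 i ≤ (P z).1 i + (Fintype.card I : ℝ) / N := by
      intro x hx z hz i
      simp only [P]
      rw [← add_div]
      apply div_le_div_of_nonneg_right _ hNpos.le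
      exact_mod_cast hclose x hx z hz i
    refine ⟨P x, fun i => ?_⟩
    rcases hcol i with ⟨z, hz, hcz⟩ | h
    · have h1 := hcl x hx z hz i
      have h2 := hc z
      rw [hcz] at h2
      have hd : dist (P z) (P x) < δ := by
        rw [Subtype.dist_eq]
        refine lt_of_le_of_lt ((dist_pi_le_iff (by positivity)).2 fun k => ?_) hnδ
        rw [Real.dist_eq, abs_sub_le_iff]
        have h3 := hcl x hx z hz k
        have h4 := hcl z hz x hx k
        constructor <;> linarith
      have h5 := hfδ hd
      rw [Subtype.dist_eq] at h5
      have h6 := lt_of_le_of_lt (dist_le_pi_dist _ _ i) h5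
      rw [Real.dist_eq] at h6
      have h7 := (abs_lt.1 h6).2
      linarith
    · have h1 : (P x).1 i ≤ (Fintype.card I : ℝ) / N := by
        simp only [P]
        apply div_le_div_of_nonneg_right _ hNpos.le
        exact_mod_cast h x hx
      have h2 := (f (P x)).2.1 i
      linarith
  let g : stdSimplex ℝ I → ℝ := fun p => ∑ i, max 0 (p.1 i - (f p).1 i)
  have hg : Continuous g := by
    apply continuous_finsetSum
    intro i _
    have h1 : Continuous fun p : stdSimplex ℝ I => p.1 i :=
      (continuous_apply i).comp continuous_subtype_val
    exact continuous_const.max (h1.sub (h1.comp hf))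
  have : Nonempty (stdSimplex ℝ I) := ⟨(happrox 1 one_pos).choose⟩
  obtain ⟨p, -, hp⟩ := isCompact_univ.exists_isMinOn Set.univ_nonempty hg.continuousOn
  have hcardpos : (0 : ℝ) < Fintype.card I := by exact_mod_cast Fintype.card_pos
  have hg0 : g p ≤ 0 := by
    by_contra hpos
    push Not at hpos
    obtain ⟨q, hq⟩ := happrox (g p / (2 * Fintype.card I)) (by positivity)
    have h1 : g p ≤ g q := hp (Set.mem_univ q)
    have h2 : g q ≤ ∑ _i : I, g p / (2 * Fintype.card I) :=
      Finset.sum_le_sum fun i _ => max_le (by positivity) (by linarith [hq i])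
    rw [Finset.sum_const, Finset.card_univ, nsmul_eq_mul] at h2
    have h3 : (Fintype.card I : ℝ) * (g p / (2 * Fintype.card I)) = g p / 2 := by
      field_simp
    linarith
  have hle : ∀ i ∈ Finset.univ, p.1 i ≤ (f p).1 i := by
    intro i _
    have h1 := Finset.single_le_sum (f := fun i => max 0 (p.1 i - (f p).1 i))
      (fun _ _ => le_max_left _ _) (Finset.mem_univ i)
    have h2 := le_max_right 0 (p.1 i - (f p).1 i)
    have h3 : g p = ∑ i, max 0 (p.1 i - (f p).1 i) := rfl
    linarith
  have := (Finset.sum_eq_sum_iff_of_le hle).1 (by rw [p.2.2, (f p).2.2])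
  exact ⟨p, Subtype.ext (funext fun i => (this i (Finset.mem_univ i)).symm)⟩
end grid

section schauder
open Filter Topology
variable {E : Type*} [NormedAddCommGroup E] [NormedSpace ℝ E]

lemma schauder_approx (C Q : Set E) (hC : Convex ℝ C) (hCne : C.Nonempty) (hQ : IsCompact Q)
    (hQC : Q ⊆ C) (G : E → E) (hG : ContinuousOn G C) (hGQ : Set.MapsTo G C Q)
    (ε : ℝ) (hε : 0 < ε) : ∃ x ∈ C, ‖x - G x‖ ≤ ε := by
  classical
  obtain ⟨t0, ht0Q, ht0f, hcov⟩ := hQ.finite_cover_balls hε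
  obtain ⟨t, rfl⟩ := ht0f.exists_finset_coe
  have hpt : ∀ y ∈ Q, ∃ i : t, dist y i.1 < ε := by
    intro y hy
    have := hcov hy
    simp only [Set.mem_iUnion, Metric.mem_ball] at this
    obtain ⟨i, hi, h⟩ := this
    exact ⟨⟨i, hi⟩, h⟩
  have hne : Nonempty t := by
    obtain ⟨x, hx⟩ := hCne
    exact ⟨(hpt _ (hGQ hx)).choose⟩
  let w : t → E → ℝ := fun i y => max 0 (ε - dist y i.1)
  have hw0 : ∀ i y, 0 ≤ w i y := fun i y => le_max_left _ _
  have hwc : ∀ i, Continuous (w i) := fun i => by fun_prop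
  let S : E → ℝ := fun y => ∑ i, w i y
  have hSc : Continuous S := continuous_finsetSum _ fun i _ => hwc i
  have hS : ∀ y ∈ Q, 0 < S y := by
    intro y hy
    obtain ⟨i, hi⟩ := hpt y hy
    exact Finset.sum_pos' (fun i _ => hw0 i y)
      ⟨i, Finset.mem_univ i, lt_max_of_lt_right (by linarith)⟩
  let X : stdSimplex ℝ t → E := fun p => ∑ i, p.1 i • i.1
  have hXc : Continuous X := by
    apply continuous_finsetSum
    intro i _
    exact ((continuous_apply i).comp continuous_subtype_val).smul continuous_const
  have hXC : ∀ p, X p ∈ C := fun p =>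
    hC.sum_mem (fun i _ => p.2.1 i) p.2.2 (fun i _ => hQC (ht0Q i.2))
  have hXQ : ∀ p, G (X p) ∈ Q := fun p => hGQ (hXC p)
  have hGX : Continuous fun p => G (X p) := hG.comp_continuous hXc hXC
  let f : stdSimplex ℝ t → stdSimplex ℝ t := fun p =>
    ⟨fun i => w i (G (X p)) / S (G (X p)),
      fun i => div_nonneg (hw0 _ _) (hS _ (hXQ p)).le, by
        rw [← Finset.sum_div]; exact div_self (hS _ (hXQ p)).ne'⟩
  have hf : Continuous f := by
    apply Continuous.subtype_mk
    apply continuous_pi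
    intro i
    exact ((hwc i).comp hGX).div (hSc.comp hGX) fun p => (hS _ (hXQ p)).ne'
  obtain ⟨p, hp⟩ := brouwer_simplex f hf
  refine ⟨X p, hXC p, ?_⟩
  have hpi : ∀ i, p.1 i = w i (G (X p)) / S (G (X p)) := by
    intro i
    conv_lhs => rw [← hp]
  have h1 : X p - G (X p) = ∑ i, p.1 i • (i.1 - G (X p)) := by
    simp only [smul_sub, Finset.sum_sub_distrib, ← Finset.sum_smul, p.2.2, one_smul]
    rfl
  rw [h1]
  calc ‖∑ i, p.1 i • (i.1 - G (X p))‖ ≤ ∑ i, ‖p.1 i • (i.1 - G (X p))‖ := norm_sum_le _ _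
    _ ≤ ∑ i, p.1 i * ε := by
        apply Finset.sum_le_sum
        intro i _
        rw [norm_smul, Real.norm_of_nonneg (p.2.1 i)]
        by_cases hi : dist (G (X p)) i.1 ≤ ε
        · apply mul_le_mul_of_nonneg_left _ (p.2.1 i)
          rwa [← dist_eq_norm, dist_comm]
        · have : p.1 i = 0 := by
            rw [hpi i]
            have : w i (G (X p)) = 0 := max_eq_left (by linarith)
            rw [this, zero_div]
          simp [this]
    _ = ε := by rw [← Finset.sum_mul, p.2.2, one_mul]

theorem schauder (C Q : Set E) (hC : Convex ℝ C) (hCne : C.Nonempty) (hQ : IsCompact Q)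
    (hQC : Q ⊆ C) (G : E → E) (hG : ContinuousOn G C) (hGQ : Set.MapsTo G C Q) :
    ∃ x ∈ C, G x = x := by
  choose x hxC hx using fun n : ℕ => schauder_approx C Q hC hCne hQ hQC G hG hGQ
    (1 / ((n : ℝ) + 1)) (by positivity)
  obtain ⟨y, hy, φ, hφ, hlim⟩ := hQ.tendsto_subseq (fun n => hGQ (hxC n))
  have h0 : Tendsto (fun n => x (φ n) - G (x (φ n))) atTop (𝓝 0) :=
    squeeze_zero_norm (fun n => hx (φ n))
      (tendsto_one_div_add_atTop_nhds_zero_nat.comp hφ.tendsto_atTop)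
  have hxy : Tendsto (fun n => x (φ n)) atTop (𝓝 y) := by
    have := h0.add hlim
    simpa using this
  have h2 : Tendsto (fun n => G (x (φ n))) atTop (𝓝 (G y)) :=
    (hG y (hQC hy)).tendsto.comp
      (tendsto_nhdsWithin_iff.2 ⟨hxy, Eventually.of_forall fun n => hxC _⟩)
  exact ⟨y, hQC hy, tendsto_nhds_unique h2 hlim⟩
end schauder
end NS

open Filter Topology

theorem nehari_schauder_fixed_point
    {X₁ X₂ : Type*}
    [NormedAddCommGroup X₁] [NormedSpace ℝ X₁] [CompleteSpace X₁]
    [NormedAddCommGroup X₂] [NormedSpace ℝ X₂] [CompleteSpace X₂]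
    -- K₁ is a non-degenerate cone
    (K₁ : Set X₁) (hK₁closed : IsClosed K₁) (hK₁conv : Convex ℝ K₁)
    (hK₁cone : ∀ lam : ℝ, 0 ≤ lam → ∀ u ∈ K₁, lam • u ∈ K₁)
    (hK₁nondeg : ∃ u ∈ K₁, u ≠ 0)
    -- D is nonempty, bounded, closed, convex
    (D : Set X₂) (hDne : D.Nonempty) (hDbdd : Bornology.IsBounded D)
    (hDclosed : IsClosed D) (hDconv : Convex ℝ D)
    -- T = (T₁,T₂) : K₁ × D → K₁ × D is completely continuous
    (T₁ : X₁ → X₂ → X₁) (T₂ : X₁ → X₂ → X₂)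
    (hTmaps : ∀ u ∈ K₁, ∀ v ∈ D, T₁ u v ∈ K₁ ∧ T₂ u v ∈ D)
    (hTcont : ContinuousOn (fun p : X₁ × X₂ => (T₁ p.1 p.2, T₂ p.1 p.2)) (K₁ ×ˢ D))
    (hTcompact : ∀ A ⊆ K₁ ×ˢ D, Bornology.IsBounded A →
      IsCompact (closure ((fun p : X₁ × X₂ => (T₁ p.1 p.2, T₂ p.1 p.2)) '' A)))
    (F : X₁ → X₁ → ℝ)
    (hFcont : ContinuousOn (fun p : X₁ × X₁ => F p.1 p.2) (K₁ ×ˢ K₁))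
    (hF : ∀ u ∈ K₁, u ≠ 0 → ∀ lam : ℝ, 0 < lam → (F (lam • u) u = 0 ↔ lam = 1))
    -- condition (h1): s(u,v) is the unique positive zero
    (s : X₁ → X₂ → ℝ)
    (h1 : ∀ u ∈ K₁, u ≠ 0 → ∀ v ∈ D,
      0 < s u v ∧ F (T₁ (s u v • u) v) (s u v • u) = 0 ∧
      ∀ σ : ℝ, 0 < σ → F (T₁ (σ • u) v) (σ • u) = 0 → σ = s u v)
    -- condition (h2): m < s < M on the unit sphere of the cone, times D
    (m M : ℝ) (hm : 0 < m) (hmM : m < M)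
    (h2 : ∀ u ∈ K₁, ‖u‖ = 1 → ∀ v ∈ D, m < s u v ∧ s u v < M) :
    ∃ u ∈ K₁, ∃ v ∈ D, T₁ u v = u ∧ T₂ u v = v ∧
      ((∀ vb ∈ D, ¬ (T₁ 0 vb = 0 ∧ T₂ 0 vb = vb)) → (u, v) ∈ nehariUb K₁ D s) := by
  classical
  have hK0 : (0 : X₁) ∈ K₁ := by
    obtain ⟨u, hu, -⟩ := hK₁nondeg
    simpa using hK₁cone 0 le_rfl u hu
  -- scaling bounds
  have hbd : ∀ u ∈ K₁, u ≠ 0 → ∀ v ∈ D, m < s u v * ‖u‖ ∧ s u v * ‖u‖ < M := by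
    intro u hu hu0 v hv
    have hn : 0 < ‖u‖ := norm_pos_iff.2 hu0
    have hu' : ‖u‖⁻¹ • u ∈ K₁ := hK₁cone _ (by positivity) u hu
    have hu'n : ‖(‖u‖⁻¹ • u)‖ = 1 := by
      rw [norm_smul, norm_inv, norm_norm, inv_mul_cancel₀ hn.ne']
    have hu'0 : ‖u‖⁻¹ • u ≠ 0 := by
      intro h; rw [h] at hu'n; simp at hu'n
    obtain ⟨hs0, hs1, -⟩ := h1 u hu hu0 v hv
    have hsm : (s u v * ‖u‖) • ‖u‖⁻¹ • u = s u v • u := by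
      rw [smul_smul, mul_assoc, mul_inv_cancel₀ hn.ne', mul_one]
    have := (h1 _ hu' hu'0 v hv).2.2 (s u v * ‖u‖) (by positivity) (by rw [hsm]; exact hs1)
    rw [this]
    exact h2 _ hu' hu'n v hv
  have hsc : ∀ u ∈ K₁, u ≠ 0 → ∀ v ∈ D,
      ContinuousWithinAt (fun p : X₁ × X₂ => s p.1 p.2) (K₁ ×ˢ D) (u, v) := by
    intro u hu hu0 v hv
    have hn : 0 < ‖u‖ := norm_pos_iff.2 hu0
    apply tendsto_of_subseq_tendsto
    intro ns hns
    obtain ⟨hns1, hns2⟩ := tendsto_nhdsWithin_iff.1 hns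
    have hfst : Tendsto (fun n => (ns n).1) atTop (𝓝 u) := (continuous_fst.tendsto _).comp hns1
    have hsnd : Tendsto (fun n => (ns n).2) atTop (𝓝 v) := (continuous_snd.tendsto _).comp hns1
    have hev : ∀ᶠ n in atTop, (ns n).1 ∈ K₁ ∧ (ns n).1 ≠ 0 ∧ (ns n).2 ∈ D := by
      filter_upwards [hns2, hfst.eventually_ne hu0] with n h3 h4
      exact ⟨h3.1, h4, h3.2⟩
    obtain ⟨q, hq, φ, hφ, hlim⟩ := (isCompact_Icc (a := m) (b := M)).tendsto_subseq'
      (x := fun n => s (ns n).1 (ns n).2 * ‖(ns n).1‖) (by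
        apply Eventually.frequently
        filter_upwards [hev] with n hn
        have := hbd _ hn.1 hn.2.1 _ hn.2.2
        exact ⟨this.1.le, this.2.le⟩)
    refine ⟨φ, ?_⟩
    have hevφ := hφ.tendsto_atTop.eventually hev
    have hfφ : Tendsto (fun n => (ns (φ n)).1) atTop (𝓝 u) := hfst.comp hφ.tendsto_atTop
    have hsφ : Tendsto (fun n => (ns (φ n)).2) atTop (𝓝 v) := hsnd.comp hφ.tendsto_atTop
    have hσ : Tendsto (fun n => s (ns (φ n)).1 (ns (φ n)).2) atTop (𝓝 (q / ‖u‖)) := by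
      have h3 := hlim.div hfφ.norm hn.ne'
      refine h3.congr' ?_
      filter_upwards [hevφ] with n hn
      have : ‖(ns (φ n)).1‖ ≠ 0 := norm_ne_zero_iff.2 hn.2.1
      simp only [Function.comp, Pi.div_apply]
      field_simp
    have hσpos : 0 < q / ‖u‖ := div_pos (lt_of_lt_of_le hm hq.1) hn
    have hsu : Tendsto (fun n => s (ns (φ n)).1 (ns (φ n)).2 • (ns (φ n)).1) atTop
        (𝓝 ((q / ‖u‖) • u)) := hσ.smul hfφ
    have hsuK : ∀ᶠ n in atTop, s (ns (φ n)).1 (ns (φ n)).2 • (ns (φ n)).1 ∈ K₁ := by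
      filter_upwards [hevφ] with n hn
      exact hK₁cone _ (h1 _ hn.1 hn.2.1 _ hn.2.2).1.le _ hn.1
    have hlimK : (q / ‖u‖) • u ∈ K₁ := hK₁cone _ hσpos.le u hu
    have hT := (hTcont ((q / ‖u‖) • u, v) ⟨hlimK, hv⟩).tendsto.comp
      (tendsto_nhdsWithin_iff.2 ⟨hsu.prodMk_nhds hsφ, by
        filter_upwards [hevφ, hsuK] with n h3 h4
        exact ⟨h4, h3.2.2⟩⟩)
    have hT1 : Tendsto (fun n => T₁ (s (ns (φ n)).1 (ns (φ n)).2 • (ns (φ n)).1) (ns (φ n)).2)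
        atTop (𝓝 (T₁ ((q / ‖u‖) • u) v)) := (continuous_fst.tendsto _).comp hT
    have hFl := (hFcont (T₁ ((q / ‖u‖) • u) v, (q / ‖u‖) • u)
      ⟨(hTmaps _ hlimK v hv).1, hlimK⟩).tendsto.comp
      (tendsto_nhdsWithin_iff.2 ⟨hT1.prodMk_nhds hsu, by
        filter_upwards [hevφ, hsuK] with n h3 h4
        exact ⟨(hTmaps _ h4 _ h3.2.2).1, h4⟩⟩)
    have hF0 : F (T₁ ((q / ‖u‖) • u) v) ((q / ‖u‖) • u) = 0 := by
      refine tendsto_nhds_unique hFl (tendsto_const_nhds.congr' ?_)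
      filter_upwards [hevφ] with n hn
      exact (h1 _ hn.1 hn.2.1 _ hn.2.2).2.1.symm
    have := (h1 u hu hu0 v hv).2.2 _ hσpos hF0
    rw [this] at hσ
    exact hσ
  -- the radial retraction
  let R : X₁ × X₂ → X₁ := fun p => min 1 (s p.1 p.2) • p.1
  have hRK : ∀ u ∈ K₁, ∀ v ∈ D, R (u, v) ∈ K₁ ∧ ‖R (u, v)‖ ≤ M := by
    intro u hu v hv
    by_cases hu0 : u = 0
    · subst hu0
      simp only [R, smul_zero, norm_zero]
      exact ⟨hK0, (hm.trans hmM).le⟩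
    · have hs0 := (h1 u hu hu0 v hv).1
      have hmin : 0 ≤ min 1 (s u v) := le_min zero_le_one hs0.le
      refine ⟨hK₁cone _ hmin u hu, ?_⟩
      simp only [R]
      rw [norm_smul, Real.norm_of_nonneg hmin]
      exact (mul_le_mul_of_nonneg_right (min_le_right _ _) (norm_nonneg _)).trans
        (hbd u hu hu0 v hv).2.le
  have hRc : ContinuousOn R (K₁ ×ˢ D) := by
    rintro ⟨u, v⟩ ⟨hu, hv⟩
    by_cases hu0 : u = 0
    · subst hu0
      have h3 : ContinuousWithinAt (fun p : X₁ × X₂ => p.1) (K₁ ×ˢ D) (0, v) :=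
        continuous_fst.continuousWithinAt
      refine h3.congr_of_eventuallyEq ?_ (by simp [R])
      have h4 : ∀ᶠ p in 𝓝 ((0 : X₁), v), ‖p.1‖ < m := by
        have : Continuous fun p : X₁ × X₂ => ‖p.1‖ := by fun_prop
        exact this.continuousAt.eventually_lt continuousAt_const (by simpa using hm)
      filter_upwards [mem_nhdsWithin_of_mem_nhds h4, self_mem_nhdsWithin] with p hp hpm
      by_cases hp0 : p.1 = 0
      · simp [R, hp0]
      · have h5 := (hbd p.1 hpm.1 hp0 p.2 hpm.2).1
        have hpn : 0 < ‖p.1‖ := norm_pos_iff.2 hp0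
        have h6 : 1 ≤ s p.1 p.2 := by
          by_contra hlt
          push Not at hlt
          have := mul_lt_mul_of_pos_right hlt hpn
          have h7 : ‖p.1‖ < m := hp
          linarith
        simp only [R]
        rw [min_eq_left h6, one_smul]
    · exact (Filter.Tendsto.min tendsto_const_nhds (hsc u hu hu0 v hv)).smul
        continuous_fst.continuousWithinAt
  -- Schauder
  let T : X₁ × X₂ → X₁ × X₂ := fun p => (T₁ p.1 p.2, T₂ p.1 p.2)
  let H : X₁ × X₂ → X₁ × X₂ := fun p => (R p, p.2)
  let C : Set (X₁ × X₂) := (K₁ ∩ Metric.closedBall 0 M) ×ˢ D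
  have hCsub : C ⊆ K₁ ×ˢ D := fun p hp => ⟨hp.1.1, hp.2⟩
  have hHc : ContinuousOn H (K₁ ×ˢ D) := hRc.prodMk continuous_snd.continuousOn
  have hTm : ∀ p ∈ K₁ ×ˢ D, T p ∈ K₁ ×ˢ D := fun p hp => hTmaps p.1 hp.1 p.2 hp.2
  have hclos : closure (T '' C) ⊆ K₁ ×ˢ D := by
    apply closure_minimal _ (hK₁closed.prod hDclosed)
    rintro _ ⟨p, hp, rfl⟩
    exact hTm p (hCsub hp)
  have hCb : Bornology.IsBounded C :=
    (Metric.isBounded_closedBall.subset Set.inter_subset_right).prod hDbdd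
  obtain ⟨⟨u, v⟩, ⟨⟨hu, -⟩, hv⟩, hfix⟩ := NS.schauder C (H '' closure (T '' C))
    ((hK₁conv.inter (convex_closedBall _ _)).prod hDconv)
    (by
      obtain ⟨v, hv⟩ := hDne
      exact ⟨(0, v), ⟨hK0, by simpa using (hm.trans hmM).le⟩, hv⟩)
    ((hTcompact C hCsub hCb).image_of_continuousOn (hHc.mono hclos))
    (by
      rintro _ ⟨p, hp, rfl⟩
      have hp' := hclos hp
      have := hRK p.1 hp'.1 p.2 hp'.2
      exact ⟨⟨this.1, by simpa using this.2⟩, hp'.2⟩)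
    (H ∘ T) (hHc.comp (hTcont.mono hCsub) fun p hp => hTm p (hCsub hp))
    (fun p hp => ⟨T p, subset_closure ⟨p, hp, rfl⟩, rfl⟩)
  have hfv : T₂ u v = v := congrArg Prod.snd hfix
  have hfu' : min 1 (s (T₁ u v) (T₂ u v)) • T₁ u v = u := congrArg Prod.fst hfix
  rw [hfv] at hfu'
  have hxK := (hTmaps u hu v hv).1
  have hfu : T₁ u v = u := by
    by_cases hx0 : T₁ u v = 0
    · rw [hx0, smul_zero] at hfu'
      rw [hx0, hfu']
    · obtain ⟨hs0, hs1, -⟩ := h1 _ hxK hx0 v hv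
      rcases le_or_gt 1 (s (T₁ u v) v) with hle | hlt
      · rwa [min_eq_left hle, one_smul] at hfu'
      · exfalso
        rw [min_eq_right hlt.le] at hfu'
        rw [hfu'] at hs1
        have hu0 : u ≠ 0 := by
          rw [← hfu']
          exact smul_ne_zero hs0.ne' hx0
        have hx : T₁ u v = (s (T₁ u v) v)⁻¹ • u :=
          (inv_smul_eq_iff₀ hs0.ne').2 hfu'.symm |>.symm
        rw [hx] at hs1
        have := (hF u hu hu0 _ (inv_pos.2 hs0)).1 hs1
        rw [inv_eq_one] at this
        linarith
  refine ⟨u, hu, v, hv, hfu, hfv, fun hno => ?_⟩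
  have hu0 : u ≠ 0 := by
    rintro rfl
    exact hno v hv ⟨hfu, hfv⟩
  refine ⟨hu, hu0, hv, ?_⟩
  refine ((h1 u hu hu0 v hv).2.2 1 one_pos ?_).symm
  rw [one_smul, hfu]
  have := (hF u hu hu0 1 one_pos).2 rfl
  rwa [one_smul] at this
end

section
/- (Nehari type fixed point theorem for a single equation.) Assume conditions (c1) and (c2). Then the operator T has a fixed point u ∈ K. If, in addition, 0 is not a fixed point of T, then s(u) = 1 (equivalently, 𝓕(T(u), u) = 0 with u ≠ 0). -/
/-- Scarf dominance of a finite set with respect to a family of rankings. -/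
def ScarfDom {V I : Type*} (r : I → V → ℕ) (W : Finset V) : Prop :=
  ∀ y, ∃ i, ∀ x ∈ W, r i y ≤ r i x

theorem ScarfDom.mono {V I : Type*} {r : I → V → ℕ} {W W' : Finset V}
    (h : ScarfDom r W') (hs : W ⊆ W') : ScarfDom r W := by
  intro y
  obtain ⟨i, hi⟩ := h y
  exact ⟨i, fun x hx => hi x (hs hx)⟩

/-- a minimizer for every ranking -/
theorem scarf_argmin {V I : Type*} (r : I → V → ℕ) (W : Finset V) (hW : W.Nonempty) :
    ∃ μ : I → V, ∀ i, μ i ∈ W ∧ ∀ x ∈ W, r i (μ i) ≤ r i x := by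
  have : ∀ i, ∃ v, v ∈ W ∧ ∀ x ∈ W, r i v ≤ r i x := fun i => by
    obtain ⟨v, hv, h⟩ := W.exists_min_image (r i) hW
    exact ⟨v, hv, h⟩
  choose μ hμ using this
  exact ⟨μ, hμ⟩

theorem scarf_surj {V I : Type*} (r : I → V → ℕ) (hr : ∀ i, Function.Injective (r i))
    (W : Finset V) (hD : ScarfDom r W) (μ : I → V)
    (hμ : ∀ i, μ i ∈ W ∧ ∀ x ∈ W, r i (μ i) ≤ r i x) (x : V) (hx : x ∈ W) :
    ∃ i, μ i = x := by
  obtain ⟨i, hi⟩ := hD x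
  exact ⟨i, hr i (le_antisymm ((hμ i).2 x hx) (hi _ (hμ i).1))⟩

/-- the two indices of a door -/
theorem scarf_pair {V I : Type*} [Fintype I] [DecidableEq I] [DecidableEq V]
    (W : Finset V) (hcard : W.card + 1 = Fintype.card I) (μ : I → V)
    (hμW : ∀ i, μ i ∈ W) (hsurj : ∀ x ∈ W, ∃ i, μ i = x) :
    ∃ i j, i ≠ j ∧ μ i = μ j ∧
      (∀ k, (∀ x ∈ W, ∃ l, l ≠ k ∧ μ l = x) ↔ (k = i ∨ k = j)) := by
  obtain ⟨i, -, j, -, hij, hμ⟩ := Finset.exists_ne_map_eq_of_card_lt_of_maps_to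
    (s := (Finset.univ : Finset I)) (t := W) (f := μ) (by rw [Finset.card_univ]; omega)
    (fun i _ => hμW i)
  refine ⟨i, j, hij, hμ, fun k => ⟨fun h => ?_, ?_⟩⟩
  · by_contra! hk
    have hsub : W ⊆ ((Finset.univ.erase k).erase j).image μ := by
      intro x hx
      obtain ⟨l, hl, hlx⟩ := h x hx
      rw [Finset.mem_image]
      by_cases hlj : l = j
      · exact ⟨i, by simp [hij, hk.1.symm], by rw [hμ, ← hlj, hlx]⟩
      · exact ⟨l, by simp [hl, hlj], hlx⟩
    have h1 := (Finset.card_le_card hsub).trans Finset.card_image_le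
    rw [Finset.card_erase_of_mem (by simp [hk.2.symm]), Finset.card_erase_of_mem (by simp),
      Finset.card_univ] at h1
    have : 1 < Fintype.card I := Fintype.one_lt_card_iff.2 ⟨i, j, hij⟩
    omega
  · rintro (rfl | rfl) x hx
    · obtain ⟨l, hl⟩ := hsurj x hx
      by_cases h : l = k
      · exact ⟨j, hij.symm, by rw [← hμ, ← h, hl]⟩
      · exact ⟨l, h, hl⟩
    · obtain ⟨l, hl⟩ := hsurj x hx
      by_cases h : l = k
      · exact ⟨i, hij, by rw [hμ, ← h, hl]⟩
      · exact ⟨l, h, hl⟩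

/-- which points complete a door to a room -/
theorem scarf_complete {V I : Type*} [Fintype I] [DecidableEq I] [DecidableEq V]
    (r : I → V → ℕ) (hr : ∀ i, Function.Injective (r i))
    (W : Finset V) (hD : ScarfDom r W) (μ : I → V)
    (hμ : ∀ i, μ i ∈ W ∧ ∀ x ∈ W, r i (μ i) ≤ r i x) (i j : I)
    (hpair : ∀ k, (∀ x ∈ W, ∃ l, l ≠ k ∧ μ l = x) ↔ (k = i ∨ k = j)) (y : V) :
    (y ∉ W ∧ ScarfDom r (insert y W)) ↔
      ∃ k, (k = i ∨ k = j) ∧ (∀ l, l ≠ k → r l (μ l) < r l y) ∧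
        ∀ z, (∀ l, l ≠ k → r l (μ l) < r l z) → r k z ≤ r k y := by
  constructor
  · rintro ⟨hy, hD'⟩
    obtain ⟨k, hk⟩ := hD' y
    have hk' : ∀ x ∈ W, r k y < r k x := fun x hx =>
      lt_of_le_of_ne (hk x (Finset.mem_insert_of_mem hx))
        (fun h => hy (by rw [hr k h]; exact hx))
    have hon : ∀ x ∈ W, ∃ l, l ≠ k ∧ μ l = x := by
      intro x hx
      obtain ⟨l, hl⟩ := hD' x
      refine ⟨l, ?_, ?_⟩
      · rintro rfl
        exact absurd (hl y (Finset.mem_insert_self _ _)) (not_le.2 (hk' x hx))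
      · exact hr l (le_antisymm ((hμ l).2 x hx) (hl _ (Finset.mem_insert_of_mem (hμ l).1)))
    have hkey : ∀ l, l ≠ k → r l (μ l) < r l y := by
      -- otherwise `y` is also minimal for `l`, and some point is lost
      intro l hl
      by_contra! hle
      have hkl : ∀ x ∈ W, ∃ l', l' ≠ k ∧ l' ≠ l ∧ μ l' = x := by
        intro x hx
        obtain ⟨l', hl'⟩ := hD' x
        refine ⟨l', ?_, ?_, ?_⟩
        · rintro rfl
          exact absurd (hl' y (Finset.mem_insert_self _ _)) (not_le.2 (hk' x hx))
        · rintro rfl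
          have h1 := hl' y (Finset.mem_insert_self _ _)
          have h2 := (hμ l').2 x hx
          exact hy (by rw [← hr l' (le_antisymm h1 (hle.trans h2))]; exact hx)
        · exact hr l' (le_antisymm ((hμ l').2 x hx)
            (hl' _ (Finset.mem_insert_of_mem (hμ l').1)))
      have hk1 := (hpair k).1 hon
      have hl1 := (hpair l).1 (fun x hx => by
        obtain ⟨a, _, b, c⟩ := hkl x hx
        exact ⟨a, b, c⟩)
      obtain ⟨l', h1, h2, h3⟩ := hkl (μ k) (hμ k).1
      have := (hpair l').1 (fun x hx => by
        obtain ⟨a, ha, hb, hc⟩ := hkl x hx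
        by_cases hal : a = l'
        · exact ⟨k, h1.symm, by rw [← h3, ← hal, hc]⟩
        · exact ⟨a, hal, hc⟩)
      grind
    refine ⟨k, (hpair k).1 hon, hkey, fun z hz => ?_⟩
    obtain ⟨l, hl⟩ := hD' z
    by_cases hlk : l = k
    · subst hlk
      exact hl y (Finset.mem_insert_self _ _)
    · exact absurd (hl _ (Finset.mem_insert_of_mem (hμ l).1)) (not_le.2 (hz l hlk))
  · rintro ⟨k, hk, hM, hmax⟩
    have hyk : r k y ≤ r k (μ k) := by
      obtain ⟨l, hl⟩ := hD y
      by_cases hlk : l = k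
      · subst hlk; exact hl _ (hμ l).1
      · exact absurd (hl _ (hμ l).1) (not_le.2 (hM l hlk))
    have hy : y ∉ W := by
      intro hy
      obtain ⟨l, hl, hlx⟩ := (hpair k).2 hk y hy
      have := hM l hl
      rw [hlx] at this
      exact lt_irrefl _ this
    refine ⟨hy, fun z => ?_⟩
    by_cases hz : ∀ l, l ≠ k → r l (μ l) < r l z
    · refine ⟨k, fun x hx => ?_⟩
      rcases Finset.mem_insert.1 hx with rfl | hx
      · exact hmax z hz
      · exact (hmax z hz).trans (hyk.trans ((hμ k).2 x hx))
    · push Not at hz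
      obtain ⟨l, hl, hle⟩ := hz
      refine ⟨l, fun x hx => ?_⟩
      rcases Finset.mem_insert.1 hx with rfl | hx
      · exact hle.trans (hM l hl).le
      · exact hle.trans ((hμ l).2 x hx)

/-- the number of completions of a door -/
theorem scarf_card {V I : Type*} [Fintype I] [Fintype V] [DecidableEq I] [DecidableEq V]
    (r : I → V → ℕ) (hr : ∀ i, Function.Injective (r i))
    (e : I → V) (heinj : Function.Injective e) (he1 : ∀ i v, v ≠ e i → r i (e i) < r i v)
    (he2 : ∀ i l x, l ≠ i → (∀ p, x ≠ e p) → r l x < r l (e i))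
    (W : Finset V) (hne : W.Nonempty) (hcard : W.card + 1 = Fintype.card I)
    (hD : ScarfDom r W) (Y : Finset V)
    (hY : ∀ y, y ∈ Y ↔ (y ∉ W ∧ ScarfDom r (insert y W))) :
    ((∃ x ∈ W, ∀ p, x ≠ e p) → Y.card = 2) ∧
    (∀ i0, (∀ x, x ∈ W ↔ ∃ p, p ≠ i0 ∧ x = e p) → Y.card = 1) := by
  obtain ⟨μ, hμ⟩ := scarf_argmin r W hne
  obtain ⟨i, j, hij, hμij, hpair⟩ := scarf_pair W hcard μ (fun i => (hμ i).1)
    (scarf_surj r hr W hD μ hμ)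
  have hc := scarf_complete r hr W hD μ hμ i j hpair
  have hmaxim : ∀ k, (∃ y, ∀ l, l ≠ k → r l (μ l) < r l y) →
      ∃ y, (∀ l, l ≠ k → r l (μ l) < r l y) ∧
        ∀ z, (∀ l, l ≠ k → r l (μ l) < r l z) → r k z ≤ r k y := by
    intro k hk
    obtain ⟨y0, hy0⟩ := hk
    obtain ⟨y, hy, hy'⟩ := (Finset.univ.filter
      (fun y => ∀ l, l ≠ k → r l (μ l) < r l y)).exists_max_image (r k) ⟨y0, by simpa using hy0⟩
    exact ⟨y, by simpa using hy, fun z hz => hy' z (by simpa using hz)⟩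
  constructor
  · rintro ⟨x, hxW, hx⟩
    have hex : ∀ k, (k = i ∨ k = j) → ∃ y, ∀ l, l ≠ k → r l (μ l) < r l y := by
      intro k hk
      have hek : e k ∉ W := by
        intro h
        have h1 : μ k = e k := by
          by_contra h1
          exact absurd ((hμ k).2 _ h) (not_le.2 (he1 k _ h1))
        have : ∃ k', k' ≠ k ∧ μ k' = e k := by
          rcases hk with rfl | rfl
          · exact ⟨j, hij.symm, by rw [← hμij, h1]⟩
          · exact ⟨i, hij, by rw [hμij, h1]⟩
        obtain ⟨k', hk', h2⟩ := this
        have h3 := (hμ k').2 x hxW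
        rw [h2] at h3
        exact absurd h3 (not_le.2 (he2 k k' x hk' hx))
      refine ⟨e k, fun l hl => ?_⟩
      exact ((hμ l).2 x hxW).trans_lt (he2 k l x hl hx)
    obtain ⟨yi, hyi, hyi'⟩ := hmaxim i (hex i (Or.inl rfl))
    obtain ⟨yj, hyj, hyj'⟩ := hmaxim j (hex j (Or.inr rfl))
    rw [Finset.card_eq_two]
    refine ⟨yi, yj, ?_, ?_⟩
    · rintro rfl
      obtain ⟨l, hl⟩ := hD yi
      have h1 := hl _ (hμ l).1
      by_cases hli : l = i
      · exact absurd h1 (not_le.2 (hyj l (by rw [hli]; exact hij)))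
      · exact absurd h1 (not_le.2 (hyi l hli))
    · ext y
      rw [hY, hc]
      simp only [Finset.mem_insert, Finset.mem_singleton]
      constructor
      · rintro ⟨k, rfl | rfl, h1, h2⟩
        · exact Or.inl (hr k (le_antisymm (hyi' y h1) (h2 _ hyi)))
        · exact Or.inr (hr k (le_antisymm (hyj' y h1) (h2 _ hyj)))
      · rintro (rfl | rfl)
        · exact ⟨i, Or.inl rfl, hyi, hyi'⟩
        · exact ⟨j, Or.inr rfl, hyj, hyj'⟩
  · intro i0 hW
    have hμe : ∀ l, l ≠ i0 → μ l = e l := by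
      intro l hl
      by_contra h1
      exact absurd ((hμ l).2 _ ((hW _).2 ⟨l, hl, rfl⟩)) (not_le.2 (he1 l _ h1))
    -- exactly one of i, j is i0; call the other j0
    obtain ⟨j0, hj0, hμj0, hpr⟩ : ∃ j0, j0 ≠ i0 ∧ μ i0 = e j0 ∧
        ∀ k, (k = i ∨ k = j) ↔ (k = i0 ∨ k = j0) := by
      by_cases h1 : i = i0
      · subst h1
        exact ⟨j, hij.symm, by rw [hμij, hμe j hij.symm], fun k => Iff.rfl⟩
      · by_cases h2 : j = i0
        · subst h2
          exact ⟨i, hij, by rw [← hμij, hμe i hij], fun k => or_comm⟩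
        · rw [hμe i h1, hμe j h2] at hμij
          exact absurd (heinj hμij) hij
    have hex : ∃ y, ∀ l, l ≠ i0 → r l (μ l) < r l y := by
      refine ⟨e i0, fun l hl => ?_⟩
      rw [hμe l hl]
      exact he1 l _ (fun h => hl (heinj h).symm)
    obtain ⟨y0, hy0, hy0'⟩ := hmaxim i0 hex
    rw [Finset.card_eq_one]
    refine ⟨y0, ?_⟩
    ext y
    rw [hY, hc]
    simp only [Finset.mem_singleton]
    constructor
    · rintro ⟨k, hk, h1, h2⟩
      rcases (hpr k).1 hk with rfl | rfl
      · exact hr k (le_antisymm (hy0' y h1) (h2 _ hy0))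
      · exfalso
        have h3 := h1 i0 hj0.symm
        rw [hμj0] at h3
        by_cases hy : ∃ p, y = e p
        · obtain ⟨p, rfl⟩ := hy
          by_cases hp : p = i0
          · subst hp
            exact absurd h3 (not_lt.2 (he1 p _ (fun h => hj0 (heinj h))).le)
          · by_cases hpk : p = k
            · subst hpk; exact lt_irrefl _ h3
            · have := h1 p hpk
              rw [hμe p hp] at this
              exact lt_irrefl _ this
        · push Not at hy
          exact absurd h3 (not_lt.2 (he2 k i0 y hj0.symm hy).le)
    · rintro rfl
      exact ⟨i0, (hpr i0).2 (Or.inl rfl), hy0, hy0'⟩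

/-- the number of doors of a room without full colouring is even -/
theorem scarf_even_doors {V I : Type*} [Fintype I] [Fintype V] [DecidableEq I] [DecidableEq V]
    (c : V → I) (i0 : I) (R : Finset V) (hR : R.card = Fintype.card I)
    (hnf : ¬ ∀ i, ∃ v ∈ R, c v = i) (S : Finset (Finset V))
    (hS : ∀ W, W ∈ S ↔ W ⊆ R ∧ W.card + 1 = Fintype.card I ∧
      W.image c = Finset.univ.erase i0) : Even S.card := by
  rcases S.eq_empty_or_nonempty with rfl | ⟨W, hWS⟩
  · simp
  obtain ⟨hWR, hWc, hWi⟩ := (hS W).1 hWS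
  obtain ⟨x, hxW, hxR⟩ : ∃ x, x ∉ W ∧ insert x W = R := by
    have : (R \ W).card = 1 := by
      have := Finset.card_sdiff_add_card_eq_card hWR
      omega
    obtain ⟨x, hx⟩ := Finset.card_eq_one.1 this
    have hx1 : x ∈ R \ W := by rw [hx]; simp
    refine ⟨x, (Finset.mem_sdiff.1 hx1).2, ?_⟩
    rw [Finset.insert_eq, ← hx, Finset.sdiff_union_of_subset hWR]
  have hinj : Set.InjOn c W := by
    apply Finset.card_image_iff.1
    rw [hWi, Finset.card_erase_of_mem (Finset.mem_univ _), Finset.card_univ]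
    omega
  have hmem : ∀ i, i ≠ i0 → ∃ v ∈ W, c v = i := by
    intro i hi
    have : i ∈ W.image c := by rw [hWi]; simp [hi]
    simpa using this
  have hnot : ∀ v ∈ W, c v ≠ i0 := by
    intro v hv h
    have : c v ∈ W.image c := Finset.mem_image_of_mem _ hv
    rw [hWi, h] at this
    simp at this
  have hxi : c x ≠ i0 := by
    intro h
    apply hnf
    intro i
    by_cases hi : i = i0
    · exact ⟨x, by rw [← hxR]; simp, by rw [h, hi]⟩
    · obtain ⟨v, hv, hv'⟩ := hmem i hi
      exact ⟨v, hWR hv, hv'⟩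
  obtain ⟨x', hx'W, hx'c⟩ := hmem _ hxi
  have hxx' : x ≠ x' := fun h => hxW (h ▸ hx'W)
  suffices S = {W, R.erase x'} by
    rw [this, Finset.card_pair]
    · exact even_two
    · intro h
      rw [h] at hx'W
      simp at hx'W
  ext W'
  rw [hS]
  simp only [Finset.mem_insert, Finset.mem_singleton]
  constructor
  · rintro ⟨h1, h2, h3⟩
    obtain ⟨z, hzR, hzW⟩ : ∃ z ∈ R, z ∉ W' := by
      by_contra! h
      have := Finset.card_le_card (show R ⊆ W' from h)
      omega
    have hW' : W' = R.erase z := by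
      apply Finset.eq_of_subset_of_card_le
      · intro a ha
        exact Finset.mem_erase.2 ⟨fun h => hzW (h ▸ ha), h1 ha⟩
      · rw [Finset.card_erase_of_mem hzR]; omega
    by_cases hzx : z = x
    · left
      rw [hW', hzx, ← hxR, Finset.erase_insert hxW]
    · right
      have hz : z ∈ W := by
        rw [← hxR] at hzR
        exact (Finset.mem_insert.1 hzR).resolve_left hzx
      have : c z ∈ W'.image c := by rw [h3]; simp [hnot z hz]
      obtain ⟨a, ha, hac⟩ := Finset.mem_image.1 this
      have haR := h1 ha
      rw [← hxR] at haR
      rcases Finset.mem_insert.1 haR with rfl | haW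
      · have : z = x' := hinj hz hx'W (by rw [← hac, hx'c])
        rw [hW', this]
      · exact absurd (hinj haW hz hac) (fun h => hzW (h ▸ ha))
  · rintro (rfl | rfl)
    · exact ⟨hWR, hWc, hWi⟩
    · refine ⟨Finset.erase_subset _ _, ?_, ?_⟩
      · have h0 : 0 < R.card := Finset.card_pos.2 ⟨x', hWR hx'W⟩
        rw [Finset.card_erase_of_mem (hWR hx'W)]; omega
      · ext i
        simp only [Finset.mem_image, Finset.mem_erase, Finset.mem_univ, and_true]
        constructor
        · rintro ⟨a, ⟨_, haR⟩, rfl⟩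
          rw [← hxR] at haR
          rcases Finset.mem_insert.1 haR with rfl | haW
          · exact hxi
          · exact hnot a haW
        · intro hi
          obtain ⟨v, hv, rfl⟩ := hmem i hi
          by_cases hvx : v = x'
          · exact ⟨x, ⟨hxx', by rw [← hxR]; simp⟩, by rw [hvx, hx'c]⟩
          · exact ⟨v, ⟨hvx, hWR hv⟩, rfl⟩

open Classical in
theorem scarf_full {V I : Type*} [Fintype I] [Fintype V]
    (r : I → V → ℕ) (hr : ∀ i, Function.Injective (r i))
    (e : I → V) (he1 : ∀ i v, v ≠ e i → r i (e i) < r i v)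
    (he2 : ∀ i l x, l ≠ i → (∀ p, x ≠ e p) → r l x < r l (e i))
    (c : V → I) (hc : ∀ i, c (e i) = i) (hI : 2 ≤ Fintype.card I) :
    ∃ R : Finset V, R.card = Fintype.card I ∧ ScarfDom r R ∧ ∀ i, ∃ v ∈ R, c v = i := by
  by_contra! hno
  have heinj : Function.Injective e := Function.LeftInverse.injective hc
  obtain ⟨i0⟩ : Nonempty I := Fintype.card_pos_iff.1 (by omega)
  let rooms : Finset (Finset V) :=
    Finset.univ.filter (fun R => R.card = Fintype.card I ∧ ScarfDom r R)
  let doors : Finset (Finset V) :=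
    Finset.univ.filter (fun W => W.card + 1 = Fintype.card I ∧ ScarfDom r W ∧
      W.image c = Finset.univ.erase i0)
  have hcount := Finset.sum_card_bipartiteAbove_eq_sum_card_bipartiteBelow
    (s := doors) (t := rooms) (fun W R => W ⊆ R)
  let W0 : Finset V := (Finset.univ.erase i0).image e
  have hW0 : ∀ x, x ∈ W0 ↔ ∃ p, p ≠ i0 ∧ x = e p := by
    intro x
    simp only [W0, Finset.mem_image, Finset.mem_erase, Finset.mem_univ, and_true]
    exact ⟨fun ⟨p, h, h'⟩ => ⟨p, h, h'.symm⟩, fun ⟨p, h, h'⟩ => ⟨p, h, h'.symm⟩⟩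
  have hW0D : ScarfDom r W0 := by
    intro y
    by_cases hy : ∃ p, y = e p
    · obtain ⟨p, rfl⟩ := hy
      refine ⟨p, fun x _ => ?_⟩
      by_cases h : x = e p
      · rw [h]
      · exact (he1 p x h).le
    · push Not at hy
      refine ⟨i0, fun x hx => ?_⟩
      obtain ⟨p, hp, rfl⟩ := (hW0 x).1 hx
      exact (he2 p i0 y hp.symm hy).le
  have hW0door : W0 ∈ doors := by
    simp only [doors, Finset.mem_filter, Finset.mem_univ, true_and]
    refine ⟨?_, hW0D, ?_⟩
    · simp only [W0]
      rw [Finset.card_image_of_injective _ heinj, Finset.card_erase_of_mem (Finset.mem_univ _),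
        Finset.card_univ]
      omega
    · simp only [W0]
      rw [Finset.image_image]
      have hce : c ∘ e = id := funext hc
      rw [hce, Finset.image_id]
  have hdoor : ∀ W ∈ doors, ((∃ x ∈ W, ∀ p, x ≠ e p) →
        (Finset.bipartiteAbove (fun W R => W ⊆ R) rooms W).card = 2) ∧
      (∀ i0, (∀ x, x ∈ W ↔ ∃ p, p ≠ i0 ∧ x = e p) →
        (Finset.bipartiteAbove (fun W R => W ⊆ R) rooms W).card = 1) := by
    intro W hW
    simp only [doors, Finset.mem_filter, Finset.mem_univ, true_and] at hW
    obtain ⟨h1, h2, h3⟩ := hW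
    have hne : W.Nonempty := Finset.card_pos.1 (by omega)
    let Y : Finset V := Finset.univ.filter (fun y => y ∉ W ∧ ScarfDom r (insert y W))
    have hYeq : Finset.bipartiteAbove (fun W R => W ⊆ R) rooms W = Y.image (fun y => insert y W) := by
      ext R
      simp only [Finset.mem_bipartiteAbove, rooms, Y, Finset.mem_filter, Finset.mem_univ,
        true_and, Finset.mem_image]
      constructor
      · rintro ⟨⟨hRc, hRD⟩, hWR⟩
        have : (R \ W).card = 1 := by
          have := Finset.card_sdiff_add_card_eq_card hWR
          omega
        obtain ⟨x, hx⟩ := Finset.card_eq_one.1 this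
        have hx1 : x ∈ R \ W := by rw [hx]; simp
        have hxR : insert x W = R := by
          rw [Finset.insert_eq, ← hx, Finset.sdiff_union_of_subset hWR]
        exact ⟨x, ⟨(Finset.mem_sdiff.1 hx1).2, by rw [hxR]; exact hRD⟩, hxR⟩
      · rintro ⟨y, ⟨hy, hyD⟩, rfl⟩
        exact ⟨⟨by rw [Finset.card_insert_of_notMem hy, h1], hyD⟩, Finset.subset_insert _ _⟩
    have hcardeq : (Finset.bipartiteAbove (fun W R => W ⊆ R) rooms W).card = Y.card := by
      rw [hYeq]
      apply Finset.card_image_of_injOn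
      intro a ha b hb hab
      simp only [Y, Finset.coe_filter, Finset.mem_univ, true_and, Set.mem_ofPred_eq] at ha hb
      have : a ∈ insert b W := by
        have hab' : insert a W = insert b W := hab
        rw [← hab']; simp
      exact (Finset.mem_insert.1 this).resolve_right ha.1
    rw [hcardeq]
    exact scarf_card r hr e heinj he1 he2 W hne h1 h2 Y (by simp [Y])
  have hL : ∀ W ∈ doors, W ≠ W0 →
      Even (Finset.bipartiteAbove (fun W R => W ⊆ R) rooms W).card := by
    intro W hW hWne
    by_cases hv : ∃ x ∈ W, ∀ p, x ≠ e p
    · rw [(hdoor W hW).1 hv]; exact even_two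
    · exfalso
      apply hWne
      push Not at hv
      simp only [doors, Finset.mem_filter, Finset.mem_univ, true_and] at hW
      obtain ⟨h1, h2, h3⟩ := hW
      ext x
      rw [hW0]
      constructor
      · intro hx
        obtain ⟨p, rfl⟩ := hv x hx
        refine ⟨p, ?_, rfl⟩
        have : c (e p) ∈ W.image c := Finset.mem_image_of_mem _ hx
        rw [h3, hc] at this
        simpa using this
      · rintro ⟨p, hp, rfl⟩
        have : p ∈ W.image c := by rw [h3]; simp [hp]
        obtain ⟨x, hx, hxp⟩ := Finset.mem_image.1 this
        obtain ⟨q, rfl⟩ := hv x hx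
        rw [hc] at hxp
        rwa [← hxp]
  have hReven : Even (∑ R ∈ rooms, (Finset.bipartiteBelow (fun W R => W ⊆ R) doors R).card) := by
    apply Finset.even_sum
    intro R hR
    simp only [rooms, Finset.mem_filter, Finset.mem_univ, true_and] at hR
    apply scarf_even_doors c i0 R hR.1
    · intro h
      obtain ⟨i, hi⟩ := hno R hR.1 hR.2
      obtain ⟨v, hv, hv'⟩ := h i
      exact hi v hv hv'
    · intro W
      simp only [Finset.mem_bipartiteBelow, doors, Finset.mem_filter, Finset.mem_univ, true_and]
      constructor
      · rintro ⟨⟨a, b, d⟩, f⟩; exact ⟨f, a, d⟩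
      · rintro ⟨f, a, d⟩; exact ⟨⟨a, hR.2.mono f, d⟩, f⟩
  rw [← hcount, ← Finset.add_sum_erase _ _ hW0door, (hdoor W0 hW0door).2 i0 hW0] at hReven
  have : Even (∑ W ∈ doors.erase W0,
      (Finset.bipartiteAbove (fun W R => W ⊆ R) rooms W).card) := by
    apply Finset.even_sum
    intro W hW
    exact hL W (Finset.mem_of_mem_erase hW) (Finset.ne_of_mem_erase hW)
  rw [Nat.even_add] at hReven
  exact absurd (hReven.2 this) (by decide)

open Classical in
theorem scarf_grid {I : Type*} [Fintype I] (hI : 2 ≤ Fintype.card I) (N : ℕ)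
    (c : (I → ℕ) → I) :
    ∃ (C : Finset I) (p : I → (I → ℕ)), C.Nonempty ∧
      (∀ i ∈ C, ∑ l, p i l = N ∧ c (p i) = i) ∧
      (∀ i ∈ C, ∀ j ∈ C, ∀ l, p i l ≤ p j l + Fintype.card I) ∧
      (∀ i ∈ C, ∀ l, l ∉ C → p i l ≤ Fintype.card I) := by
  let G := {x : I → ℕ // x ∈ Finset.piAntidiag (Finset.univ : Finset I) N}
  have hGsum : ∀ x : G, ∑ l, x.1 l = N := fun x => (Finset.mem_piAntidiag.1 x.2).1
  have hGle : ∀ (x : G) l, x.1 l ≤ N := fun x l => by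
    refine le_trans ?_ (hGsum x).le
    exact Finset.single_le_sum (f := x.1) (fun _ _ => Nat.zero_le _) (Finset.mem_univ l)
  obtain ⟨K, ⟨E⟩⟩ : ∃ K, Nonempty (G ≃ Fin K) := ⟨_, ⟨Fintype.equivFin G⟩⟩
  let f := Fintype.equivFin I
  let r : I → G ⊕ I → ℕ := fun i v => Sum.elim (fun x : G => x.1 i * K + (E x : ℕ) + 1)
    (fun j => if j = i then 0 else (N + 1) * K + 1 + (f j : ℕ)) v
  have hrl : ∀ i (x : G), r i (Sum.inl x) = x.1 i * K + (E x : ℕ) + 1 := fun _ _ => rfl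
  have hrr : ∀ i j, r i (Sum.inr j) = if j = i then 0 else (N + 1) * K + 1 + (f j : ℕ) :=
    fun _ _ => rfl
  have hrlt : ∀ i (x : G), r i (Sum.inl x) < (N + 1) * K + 1 := by
    intro i x
    rw [hrl]
    have h1 := (E x).2
    have h2 := Nat.mul_le_mul_right K (hGle x i)
    rw [Nat.add_mul]
    omega
  have hr : ∀ i, Function.Injective (r i) := by
    rintro i (x | a) (y | b) h
    · rw [hrl, hrl] at h
      have h1 := (E x).2
      have h2 := (E y).2
      have h3 : (x.1 i * K + (E x : ℕ)) % K = (y.1 i * K + (E y : ℕ)) % K := by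
        congr 1; omega
      rw [Nat.mul_add_mod_of_lt h1, Nat.mul_add_mod_of_lt h2] at h3
      rw [E.injective (Fin.ext h3)]
    · have := hrlt i x
      rw [h, hrr] at this
      rw [hrr] at h
      split_ifs at h this
      · rw [hrl] at h; omega
      · omega
    · have := hrlt i y
      rw [← h, hrr] at this
      rw [hrr] at h
      split_ifs at h this
      · rw [hrl] at h; omega
      · omega
    · rw [hrr, hrr] at h
      split_ifs at h with h1 h2 h2
      · rw [h1, h2]
      · omega
      · omega
      · have : f a = f b := Fin.ext (by omega)
        rw [f.injective this]
  obtain ⟨R, hRc, hRD, hRfull⟩ := scarf_full r hr (Sum.inr) (by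
      rintro i (x | j) hv
      · rw [hrr, hrl]; simp
      · rw [hrr, hrr]
        have : j ≠ i := fun h => hv (by rw [h])
        simp [this]) (by
      rintro i l (x | j) hil hx
      · have := hrlt l x
        rw [hrr]
        simp only [hil.symm, if_false]
        omega
      · exact absurd rfl (hx j))
    (Sum.elim (fun x : G => c x.1) id) (fun i => rfl) hI
  let C : Finset I := Finset.univ.filter (fun i => Sum.inr i ∉ R)
  have hC : ∀ i, i ∈ C ↔ Sum.inr i ∉ R := by simp [C]
  have hdom : ∀ y : G, ∃ i ∈ C, ∀ x : G, Sum.inl x ∈ R → y.1 i ≤ x.1 i := by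
    intro y
    obtain ⟨i, hi⟩ := hRD (Sum.inl y)
    refine ⟨i, ?_, ?_⟩
    · rw [hC]
      intro h
      have := hi _ h
      rw [hrl, hrr] at this
      simp at this
    · intro x hx
      have := hi _ hx
      rw [hrl, hrl] at this
      by_contra! hlt
      have h1 := (E x).2
      have h2 := Nat.mul_le_mul_right K (Nat.succ_le_of_lt hlt)
      rw [Nat.succ_mul] at h2
      omega
  have hpex : ∀ i, ∃ x : I → ℕ, i ∈ C → ∃ h : x ∈ Finset.piAntidiag (Finset.univ : Finset I) N,
      Sum.inl ⟨x, h⟩ ∈ R ∧ c x = i := by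
    intro i
    by_cases hi : i ∈ C
    · obtain ⟨v, hv, hvc⟩ := hRfull i
      rcases v with x | j
      · exact ⟨x.1, fun _ => ⟨x.2, hv, hvc⟩⟩
      · have : j = i := hvc
        rw [this] at hv
        exact absurd hv ((hC i).1 hi)
    · exact ⟨0, fun h => absurd h hi⟩
  choose p hp using hpex
  obtain ⟨i1⟩ : Nonempty I := Fintype.card_pos_iff.1 (by omega)
  have hy0 : (Pi.single i1 N : I → ℕ) ∈ Finset.piAntidiag (Finset.univ : Finset I) N := by
    rw [Finset.mem_piAntidiag]
    simp
  have hCne : C.Nonempty := by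
    obtain ⟨i, hi, _⟩ := hdom ⟨_, hy0⟩
    exact ⟨i, hi⟩
  -- minima of the coordinates
  have hmin : ∀ i, ∃ a : ℕ, (∀ x : G, Sum.inl x ∈ R → a ≤ x.1 i) ∧
      ∃ x : G, Sum.inl x ∈ R ∧ x.1 i = a := by
    intro i
    obtain ⟨j, hj⟩ := hCne
    obtain ⟨hm, hmR, _⟩ := hp j hj
    obtain ⟨x, hx, hx'⟩ := (Finset.univ.filter (fun x : G => Sum.inl x ∈ R)).exists_min_image
      (fun x => x.1 i) ⟨⟨p j, hm⟩, by simpa using hmR⟩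
    refine ⟨x.1 i, fun z hz => hx' z (by simpa using hz), x, by simpa using hx, rfl⟩
  choose a ha ha' using hmin
  have hsum : N < ∑ i ∈ C, (a i + 1) := by
    by_contra! hle
    obtain ⟨j, hj⟩ := hCne
    let y : I → ℕ := fun i => (if i ∈ C then a i + 1 else 0) +
      (if i = j then N - ∑ i ∈ C, (a i + 1) else 0)
    have hy : y ∈ Finset.piAntidiag (Finset.univ : Finset I) N := by
      rw [Finset.mem_piAntidiag]
      refine ⟨?_, fun _ _ => Finset.mem_univ _⟩
      simp only [y]
      rw [Finset.sum_add_distrib, Finset.sum_ite_mem, Finset.univ_inter, Finset.sum_ite_eq']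
      simp only [Finset.mem_univ, if_true]
      omega
    obtain ⟨i, hi, hi'⟩ := hdom ⟨y, hy⟩
    obtain ⟨x, hx, hxa⟩ := ha' i
    have := hi' x hx
    rw [hxa] at this
    simp only [y, hi, if_true] at this
    omega
  rw [Finset.sum_add_distrib] at hsum
  have hCcard : C.card ≤ Fintype.card I := Finset.card_le_univ C
  simp only [Finset.sum_const, smul_eq_mul, mul_one] at hsum
  have hin : ∀ x : G, Sum.inl x ∈ R → ∀ l ∈ C, x.1 l ≤ a l + Fintype.card I := by
    intro x hx l hl
    have h1 : ∑ i ∈ C, x.1 i ≤ N := by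
      refine le_trans ?_ (hGsum x).le
      exact Finset.sum_le_univ_sum_of_nonneg (fun _ => Nat.zero_le _)
    rw [← Finset.add_sum_erase _ _ hl] at h1 hsum
    have h2 : ∑ i ∈ C.erase l, a i ≤ ∑ i ∈ C.erase l, x.1 i :=
      Finset.sum_le_sum (fun i _ => ha i x hx)
    omega
  have hout : ∀ x : G, Sum.inl x ∈ R → ∀ l, l ∉ C → x.1 l ≤ Fintype.card I := by
    intro x hx l hl
    have h1 : ∑ i ∈ insert l C, x.1 i ≤ N := by
      refine le_trans ?_ (hGsum x).le
      exact Finset.sum_le_univ_sum_of_nonneg (fun _ => Nat.zero_le _)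
    rw [Finset.sum_insert hl] at h1
    have h2 : ∑ i ∈ C, a i ≤ ∑ i ∈ C, x.1 i :=
      Finset.sum_le_sum (fun i _ => ha i x hx)
    omega
  refine ⟨C, p, hCne, ?_, ?_, ?_⟩
  · intro i hi
    obtain ⟨h1, h2, h3⟩ := hp i hi
    exact ⟨hGsum ⟨_, h1⟩, h3⟩
  · intro i hi j hj l
    obtain ⟨h1, h2, h3⟩ := hp i hi
    obtain ⟨k1, k2, k3⟩ := hp j hj
    by_cases hl : l ∈ C
    · have h4 := hin _ h2 l hl
      have h5 := ha l _ k2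
      simp only at h4 h5
      omega
    · have h4 := hout _ h2 l hl
      simp only at h4
      omega
  · intro i hi l hl
    obtain ⟨h1, h2, h3⟩ := hp i hi
    exact hout _ h2 l hl

/-- Approximate Brouwer fixed points on the standard simplex. -/
theorem brouwer_approx {I : Type*} [Fintype I] (hI : 2 ≤ Fintype.card I)
    (f : (I → ℝ) → (I → ℝ)) (hf : ContinuousOn f (stdSimplex ℝ I))
    (hmaps : ∀ x ∈ stdSimplex ℝ I, f x ∈ stdSimplex ℝ I) (ε : ℝ) (hε : 0 < ε) :
    ∃ x ∈ stdSimplex ℝ I, ∀ i, x i - ε ≤ f x i := by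
  classical
  have huc := (isCompact_stdSimplex ℝ I).uniformContinuousOn_of_continuous hf
  rw [Metric.uniformContinuousOn_iff] at huc
  obtain ⟨δ, hδ, hδ'⟩ := huc (ε / 2) (by positivity)
  obtain ⟨N, hN⟩ := exists_nat_gt ((Fintype.card I : ℝ) / min δ (ε / 2))
  have hmpos : 0 < min δ (ε / 2) := lt_min hδ (by positivity)
  have hNpos : (0 : ℝ) < N := lt_of_le_of_lt (by positivity) hN
  have hsmall : (Fintype.card I : ℝ) / N < min δ (ε / 2) := by
    rw [div_lt_iff₀ hNpos]
    rw [div_lt_iff₀ hmpos] at hN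
    linarith
  let q : (I → ℕ) → (I → ℝ) := fun x i => (x i : ℝ) / N
  have hq : ∀ x : I → ℕ, ∑ i, x i = N → q x ∈ stdSimplex ℝ I := by
    intro x hx
    refine ⟨fun i => by simp only [q]; positivity, ?_⟩
    simp only [q]
    rw [← Finset.sum_div, ← Nat.cast_sum, hx, div_self hNpos.ne']
  have hcol : ∀ x : I → ℕ, ∃ i, ∑ i, x i = N → q x i ≤ f (q x) i := by
    intro x
    by_cases hx : ∑ i, x i = N
    · by_contra! h
      have h1 : ∑ i, f (q x) i < ∑ i, q x i := by
        apply Finset.sum_lt_sum_of_nonempty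
        · have : Nonempty I := Fintype.card_pos_iff.1 (by omega)
          exact Finset.univ_nonempty
        · exact fun i _ => (h i).2
      rw [(hmaps _ (hq x hx)).2, (hq x hx).2] at h1
      exact lt_irrefl _ h1
    · obtain ⟨i⟩ : Nonempty I := Fintype.card_pos_iff.1 (by omega)
      exact ⟨i, fun h => absurd h hx⟩
  choose c hc using hcol
  obtain ⟨C, p, ⟨j, hj⟩, h1, h2, h3⟩ := scarf_grid hI N c
  have hqj := hq _ (h1 j hj).1
  refine ⟨q (p j), hqj, fun i => ?_⟩
  by_cases hi : i ∈ C
  · have hqi := hq _ (h1 i hi).1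
    have hle : ∀ a ∈ C, ∀ b ∈ C, ∀ l, q (p a) l - q (p b) l ≤ Fintype.card I / N := by
      intro a ha b hb l
      simp only [q]
      rw [← sub_div]
      apply div_le_div_of_nonneg_right _ hNpos.le
      have := h2 a ha b hb l
      have h' : ((p a l : ℕ) : ℝ) ≤ p b l + Fintype.card I := by exact_mod_cast this
      linarith
    have hd : dist (q (p i)) (q (p j)) < δ := by
      rw [dist_pi_lt_iff hδ]
      intro l
      rw [Real.dist_eq, abs_lt]
      have := hle i hi j hj l
      have := hle j hj i hi l
      have := hsmall.trans_le (min_le_left _ _)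
      constructor <;> linarith
    have h4 := hδ' _ hqi _ hqj hd
    rw [dist_pi_lt_iff (by positivity)] at h4
    have h5 := h4 i
    rw [Real.dist_eq, abs_lt] at h5
    have h6 := hc (p i) (h1 i hi).1
    rw [(h1 i hi).2] at h6
    have := hle j hj i hi i
    have := hsmall.trans_le (min_le_right _ _)
    linarith [h5.2]
  · have h4 := h3 j hj i hi
    have h5 : q (p j) i ≤ Fintype.card I / N := by
      simp only [q]
      apply div_le_div_of_nonneg_right _ hNpos.le
      exact_mod_cast h4
    have := hsmall.trans_le (min_le_right _ _)
    have := (hmaps _ hqj).1 i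
    linarith

/-- The Brouwer fixed point theorem on the standard simplex. -/
theorem brouwer_simplex {I : Type*} [Fintype I] [Nonempty I]
    (f : (I → ℝ) → (I → ℝ)) (hf : ContinuousOn f (stdSimplex ℝ I))
    (hmaps : ∀ x ∈ stdSimplex ℝ I, f x ∈ stdSimplex ℝ I) :
    ∃ x ∈ stdSimplex ℝ I, f x = x := by
  classical
  obtain ⟨i0⟩ := ‹Nonempty I›
  have hne : (stdSimplex ℝ I).Nonempty := ⟨_, single_mem_stdSimplex ℝ i0⟩
  by_cases hI : 2 ≤ Fintype.card I
  · have hg : ContinuousOn (fun x => ∑ i, |f x i - x i|) (stdSimplex ℝ I) := by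
      apply continuousOn_finsetSum
      intro i _
      have h1 : ContinuousOn (fun x => f x i) (stdSimplex ℝ I) :=
        (continuous_apply i).comp_continuousOn hf
      exact (h1.sub (continuous_apply i).continuousOn).abs
    obtain ⟨x, hx, hmin⟩ := (isCompact_stdSimplex ℝ I).exists_isMinOn hne hg
    refine ⟨x, hx, ?_⟩
    have hle : ∑ i, |f x i - x i| ≤ 0 := by
      apply le_of_forall_pos_le_add
      intro ε hε
      have hcpos : (0 : ℝ) < Fintype.card I := by
        have : 0 < Fintype.card I := by omega
        exact_mod_cast this
      obtain ⟨y, hy, hy'⟩ := brouwer_approx hI f hf hmaps (ε / (2 * Fintype.card I))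
        (by positivity)
      have h1 := hmin hy
      simp only [Set.mem_ofPred_eq] at h1
      have h2 : ∑ i, |f y i - y i| ≤ ∑ i, (f y i - y i + 2 * (ε / (2 * Fintype.card I))) := by
        apply Finset.sum_le_sum
        intro i _
        have := hy' i
        have h0 : 0 < ε / (2 * (Fintype.card I : ℝ)) := by positivity
        rw [abs_le]
        constructor <;> linarith
      rw [Finset.sum_add_distrib, Finset.sum_sub_distrib, (hmaps y hy).2, hy.2] at h2
      simp only [Finset.sum_const, Finset.card_univ, nsmul_eq_mul] at h2
      have h3 : (Fintype.card I : ℝ) * (2 * (ε / (2 * Fintype.card I))) = ε := by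
        field_simp
      linarith
    have h0 := (Finset.sum_eq_zero_iff_of_nonneg (fun i _ => abs_nonneg (f x i - x i))).1
      (le_antisymm hle (Finset.sum_nonneg (fun i _ => abs_nonneg _)))
    funext i
    have := abs_eq_zero.1 (h0 i (Finset.mem_univ i))
    linarith
  · have hsub : Subsingleton I := Fintype.card_le_one_iff_subsingleton.1 (by omega)
    obtain ⟨x, hx⟩ := hne
    refine ⟨x, hx, ?_⟩
    have huniv : (Finset.univ : Finset I) = {i0} := by
      ext i; simp [Subsingleton.elim i i0]
    funext i
    have h1 := hx.2
    have h2 := (hmaps x hx).2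
    rw [huniv, Finset.sum_singleton] at h1 h2
    rw [Subsingleton.elim i i0, h1, h2]

theorem schauder_approx {X : Type*} [NormedAddCommGroup X] [NormedSpace ℝ X]
    (K : Set X) (hKclosed : IsClosed K) (hKconv : Convex ℝ K) (hne : K.Nonempty)
    (f : X → X) (hf : ContinuousOn f K) (hmaps : ∀ u ∈ K, f u ∈ K)
    (hc : IsCompact (closure (f '' K))) (ε : ℝ) (hε : 0 < ε) :
    ∃ x ∈ K, dist x (f x) ≤ ε := by
  classical
  have hSK : closure (f '' K) ⊆ K := by
    apply closure_minimal _ hKclosed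
    rintro _ ⟨u, hu, rfl⟩
    exact hmaps u hu
  obtain ⟨t, htS, htfin, hcov⟩ := hc.finite_cover_balls hε
  have : Fintype t := htfin.fintype
  have hex : ∀ u ∈ K, ∃ i : t, dist (f u) i < ε := by
    intro u hu
    have := hcov (subset_closure (Set.mem_image_of_mem f hu))
    simp only [Set.mem_iUnion, Metric.mem_ball] at this
    obtain ⟨i, hi, h⟩ := this
    exact ⟨⟨i, hi⟩, h⟩
  have : Nonempty t := by
    obtain ⟨u, hu⟩ := hne
    obtain ⟨i, _⟩ := hex u hu
    exact ⟨i⟩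
  let φ : t → X → ℝ := fun i y => max 0 (ε - dist y i)
  have hφc : ∀ i, Continuous (φ i) := fun i => by
    simp only [φ]; fun_prop
  have hφ0 : ∀ i y, 0 ≤ φ i y := fun i y => le_max_left _ _
  let P : (t → ℝ) → X := fun w => ∑ j, w j • (j : X)
  have hPc : Continuous P := by simp only [P]; fun_prop
  have hPK : ∀ w ∈ stdSimplex ℝ t, P w ∈ K := by
    intro w hw
    exact hKconv.sum_mem (fun i _ => hw.1 i) hw.2 (fun i _ => hSK (htS i.2))
  have hΦ : ∀ u ∈ K, 0 < ∑ k, φ k (f u) := by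
    intro u hu
    obtain ⟨i, hi⟩ := hex u hu
    apply Finset.sum_pos' (fun k _ => hφ0 k _)
    exact ⟨i, Finset.mem_univ _, lt_max_of_lt_right (by linarith)⟩
  let g : (t → ℝ) → (t → ℝ) := fun w i => φ i (f (P w)) / ∑ k, φ k (f (P w))
  have hfP : ContinuousOn (fun w => f (P w)) (stdSimplex ℝ t) :=
    hf.comp hPc.continuousOn hPK
  obtain ⟨w, hw, hgw⟩ := brouwer_simplex g (by
      rw [continuousOn_pi]
      intro i
      apply ContinuousOn.div
      · exact (hφc i).comp_continuousOn hfP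
      · apply continuousOn_finsetSum
        intro k _
        exact (hφc k).comp_continuousOn hfP
      · intro w hw
        exact (hΦ _ (hPK w hw)).ne') (by
      intro w hw
      have := hΦ _ (hPK w hw)
      refine ⟨fun i => div_nonneg (hφ0 _ _) this.le, ?_⟩
      simp only [g]
      rw [← Finset.sum_div, div_self this.ne'])
  refine ⟨P w, hPK w hw, ?_⟩
  have h1 : P w - f (P w) = ∑ j, w j • ((j : X) - f (P w)) := by
    simp only [smul_sub, Finset.sum_sub_distrib]
    rw [← Finset.sum_smul, hw.2, one_smul]
  rw [dist_eq_norm, h1]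
  calc ‖∑ j, w j • ((j : X) - f (P w))‖ ≤ ∑ j, ‖w j • ((j : X) - f (P w))‖ := norm_sum_le _ _
    _ ≤ ∑ j, w j * ε := by
      apply Finset.sum_le_sum
      intro j _
      rw [norm_smul, Real.norm_of_nonneg (hw.1 j)]
      by_cases hj : dist (f (P w)) j < ε
      · apply mul_le_mul_of_nonneg_left _ (hw.1 j)
        rw [norm_sub_rev, ← dist_eq_norm]
        exact hj.le
      · have : w j = 0 := by
          rw [← hgw]
          simp only [g, φ]
          rw [max_eq_left (by linarith), zero_div]
        simp [this]
    _ = ε := by rw [← Finset.sum_mul, hw.2, one_mul]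

/-- The Schauder fixed point theorem. -/
theorem schauder_fixed {X : Type*} [NormedAddCommGroup X] [NormedSpace ℝ X]
    (K : Set X) (hKclosed : IsClosed K) (hKconv : Convex ℝ K) (hne : K.Nonempty)
    (f : X → X) (hf : ContinuousOn f K) (hmaps : ∀ u ∈ K, f u ∈ K)
    (hc : IsCompact (closure (f '' K))) :
    ∃ x ∈ K, f x = x := by
  have hSK : closure (f '' K) ⊆ K := by
    apply closure_minimal _ hKclosed
    rintro _ ⟨u, hu, rfl⟩
    exact hmaps u hu
  have h := fun n : ℕ => schauder_approx K hKclosed hKconv hne f hf hmaps hc (1 / ((n : ℝ) + 1))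
    (by positivity)
  choose x hxK hx using h
  obtain ⟨y, hy, ψ, hψ, hlim⟩ := hc.tendsto_subseq
    (x := fun n => f (x n)) (fun n => subset_closure (Set.mem_image_of_mem f (hxK n)))
  have hd : Filter.Tendsto (fun n => dist (x (ψ n)) (f (x (ψ n)))) Filter.atTop (nhds 0) := by
    have h0 : Filter.Tendsto (fun n => dist (x n) (f (x n))) Filter.atTop (nhds 0) :=
      squeeze_zero (fun n => dist_nonneg) hx tendsto_one_div_add_atTop_nhds_zero_nat
    exact h0.comp hψ.tendsto_atTop
  have hxy : Filter.Tendsto (fun n => x (ψ n)) Filter.atTop (nhds y) := by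
    rw [tendsto_iff_dist_tendsto_zero]
    rw [tendsto_iff_dist_tendsto_zero] at hlim
    have := hd.add hlim
    rw [add_zero] at this
    exact squeeze_zero (fun n => dist_nonneg) (fun n => dist_triangle _ _ _) this
  have hyK := hSK hy
  refine ⟨y, hyK, ?_⟩
  have h2 : Filter.Tendsto (fun n => f (x (ψ n))) Filter.atTop (nhds (f y)) :=
    (hf y hyK).tendsto.comp (tendsto_nhdsWithin_iff.2
      ⟨hxy, Filter.Eventually.of_forall (fun n => hxK _)⟩)
  exact tendsto_nhds_unique h2 hlim


/-!
STATEMENT 8 (Nehari type fixed point theorem for a single equation): Assume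
conditions (c1) and (c2).  Then the operator T has a fixed point u ∈ K.  If, in
addition, 0 is not a fixed point of T, then s(u) = 1 (equivalently,
𝓕(T(u), u) = 0 with u ≠ 0).
-/

theorem nehari_fixed_point_single_equation
    {X : Type*}
    [NormedAddCommGroup X] [NormedSpace ℝ X] [CompleteSpace X]
    -- K is a non-degenerate cone
    (K : Set X) (hKclosed : IsClosed K) (hKconv : Convex ℝ K)
    (hKcone : ∀ lam : ℝ, 0 ≤ lam → ∀ u ∈ K, lam • u ∈ K)
    (hKnondeg : ∃ u ∈ K, u ≠ 0)
    -- T : K → K is completely continuous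
    (T : X → X) (hTmaps : ∀ u ∈ K, T u ∈ K)
    (hTcont : ContinuousOn T K)
    (hTcompact : ∀ A ⊆ K, Bornology.IsBounded A → IsCompact (closure (T '' A)))
    (F : X → X → ℝ)
    (hFcont : ContinuousOn (fun p : X × X => F p.1 p.2) (K ×ˢ K))
    (hF : ∀ u ∈ K, u ≠ 0 → ∀ lam : ℝ, 0 < lam → (F (lam • u) u = 0 ↔ lam = 1))
    -- condition (c1): s(u) is the unique positive zero
    (s : X → ℝ)
    (c1 : ∀ u ∈ K, u ≠ 0 →
      0 < s u ∧ F (T (s u • u)) (s u • u) = 0 ∧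
      ∀ σ : ℝ, 0 < σ → F (T (σ • u)) (σ • u) = 0 → σ = s u)
    -- condition (c2): m < s < M on the unit sphere of the cone
    (m M : ℝ) (hm : 0 < m) (hmM : m < M)
    (c2 : ∀ u ∈ K, ‖u‖ = 1 → m < s u ∧ s u < M) :
    ∃ u ∈ K, T u = u ∧
      (T 0 ≠ 0 → u ≠ 0 ∧ s u = 1 ∧ F (T u) u = 0) := by
  have hK0 : (0 : X) ∈ K := by
    obtain ⟨u, hu, _⟩ := hKnondeg
    simpa using hKcone 0 le_rfl u hu
  -- scaled bounds
  have hbd : ∀ u ∈ K, u ≠ 0 → m < s u * ‖u‖ ∧ s u * ‖u‖ < M := by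
    intro u hu hu0
    have hn : 0 < ‖u‖ := norm_pos_iff.2 hu0
    have hv : ‖u‖⁻¹ • u ∈ K := hKcone _ (by positivity) u hu
    have hv1 : ‖‖u‖⁻¹ • u‖ = 1 := by
      rw [norm_smul, norm_inv, norm_norm, inv_mul_cancel₀ hn.ne']
    have hv0 : ‖u‖⁻¹ • u ≠ 0 := by
      intro h
      rw [h, norm_zero] at hv1
      exact zero_ne_one hv1
    obtain ⟨h1, h2, h3⟩ := c1 u hu hu0
    have h4 : (s u * ‖u‖) • (‖u‖⁻¹ • u) = s u • u := by
      rw [smul_smul, mul_assoc, mul_inv_cancel₀ hn.ne', mul_one]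
    have h5 := (c1 _ hv hv0).2.2 (s u * ‖u‖) (by positivity) (by rw [h4]; exact h2)
    rw [h5]
    exact c2 _ hv hv1
  -- continuity of s
  have hscont : ∀ u ∈ K, u ≠ 0 → Filter.Tendsto s (nhdsWithin u K) (nhds (s u)) := by
    intro u hu hu0
    have hn : 0 < ‖u‖ := norm_pos_iff.2 hu0
    have hev0 : ∀ᶠ v in nhdsWithin u K, v ≠ 0 ∧ v ∈ K :=
      ((eventually_ne_nhds hu0).filter_mono nhdsWithin_le_nhds).and self_mem_nhdsWithin
    have hτ : Filter.Tendsto (fun v => s v * ‖v‖) (nhdsWithin u K) (nhds (s u * ‖u‖)) := by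
      apply (isCompact_Icc (a := m) (b := M)).tendsto_nhds_of_unique_mapClusterPt
      · filter_upwards [hev0] with v hv
        exact ⟨(hbd v hv.2 hv.1).1.le, (hbd v hv.2 hv.1).2.le⟩
      · intro τ0 hτ0 hcl
        obtain ⟨U, hU, hUt⟩ := mapClusterPt_iff_ultrafilter.1 hcl
        have hid : Filter.Tendsto (fun v : X => v) U (nhds u) :=
          (hU.trans nhdsWithin_le_nhds)
        have hevU : ∀ᶠ v in (U : Filter X), v ≠ 0 ∧ v ∈ K := hU hev0
        have hsU : Filter.Tendsto s U (nhds (τ0 / ‖u‖)) := by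
          refine (hUt.div hid.norm hn.ne').congr' ?_
          filter_upwards [hevU] with v hv
          exact mul_div_cancel_right₀ _ (norm_ne_zero_iff.2 hv.1)
        have hσ : 0 < τ0 / ‖u‖ := div_pos (hm.trans_le hτ0.1) hn
        have hw : Filter.Tendsto (fun v => s v • v) U (nhds ((τ0 / ‖u‖) • u)) := hsU.smul hid
        have hwK : ∀ᶠ v in (U : Filter X), s v • v ∈ K := by
          filter_upwards [hevU] with v hv
          exact hKcone _ (c1 v hv.2 hv.1).1.le v hv.2
        have hσK : (τ0 / ‖u‖) • u ∈ K := hKcone _ hσ.le u hu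
        have hwW := tendsto_nhdsWithin_iff.2 ⟨hw, hwK⟩
        have hT := (hTcont _ hσK).tendsto.comp hwW
        have hpair := hT.prodMk_nhds hw
        have hF1 := (hFcont (T ((τ0 / ‖u‖) • u), (τ0 / ‖u‖) • u)
          ⟨hTmaps _ hσK, hσK⟩).tendsto.comp (tendsto_nhdsWithin_iff.2 ⟨hpair, by
            filter_upwards [hwK] with v hv
            exact ⟨hTmaps _ hv, hv⟩⟩)
        have hF2 : Filter.Tendsto (fun _ : X => (0 : ℝ)) U
            (nhds (F (T ((τ0 / ‖u‖) • u)) ((τ0 / ‖u‖) • u))) := by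
          refine hF1.congr' ?_
          filter_upwards [hevU] with v hv
          exact (c1 v hv.2 hv.1).2.1
        have hF0 := tendsto_nhds_unique hF2 tendsto_const_nhds
        have := (c1 u hu hu0).2.2 _ hσ hF0
        rw [← this, div_mul_cancel₀ _ hn.ne']
    have hid : Filter.Tendsto (fun v : X => v) (nhdsWithin u K) (nhds u) := nhdsWithin_le_nhds
    have := hτ.div hid.norm hn.ne'
    rw [mul_div_cancel_right₀ _ hn.ne'] at this
    refine this.congr' ?_
    filter_upwards [hev0] with v hv
    exact mul_div_cancel_right₀ _ (norm_ne_zero_iff.2 hv.1)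
  -- the retraction
  let ρ : X → X := fun u => min 1 (s u) • u
  have hρ0 : ρ 0 = 0 := smul_zero _
  have hmin : ∀ u ∈ K, u ≠ 0 → 0 < min 1 (s u) := fun u hu hu0 =>
    lt_min one_pos (c1 u hu hu0).1
  have hρK : ∀ u ∈ K, ρ u ∈ K := by
    intro u hu
    by_cases hu0 : u = 0
    · rw [hu0, hρ0]; exact hK0
    · exact hKcone _ (hmin u hu hu0).le u hu
  have hρle : ∀ u ∈ K, ‖ρ u‖ ≤ ‖u‖ ∧ ‖ρ u‖ ≤ M := by
    intro u hu
    by_cases hu0 : u = 0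
    · rw [hu0, hρ0, norm_zero]
      exact ⟨le_rfl, (hm.trans hmM).le⟩
    · have h1 : ‖ρ u‖ = min 1 (s u) * ‖u‖ := by
        simp only [ρ]
        rw [norm_smul, Real.norm_of_nonneg (hmin u hu hu0).le]
      rw [h1]
      constructor
      · exact mul_le_of_le_one_left (norm_nonneg _) (min_le_left _ _)
      · exact (mul_le_mul_of_nonneg_right (min_le_right _ _) (norm_nonneg _)).trans
          (hbd u hu hu0).2.le
  have hρcont : ContinuousOn ρ K := by
    intro u hu
    by_cases hu0 : u = 0
    · subst hu0
      unfold ContinuousWithinAt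
      rw [hρ0, tendsto_zero_iff_norm_tendsto_zero]
      have hid : Filter.Tendsto (fun v : X => ‖v‖) (nhdsWithin 0 K) (nhds 0) := by
        have : Filter.Tendsto (fun v : X => v) (nhdsWithin 0 K) (nhds 0) := nhdsWithin_le_nhds
        simpa using this.norm
      refine squeeze_zero' (Filter.Eventually.of_forall fun _ => norm_nonneg _) ?_ hid
      filter_upwards [self_mem_nhdsWithin] with v hv
      exact (hρle v hv).1
    · have hid : Filter.Tendsto (fun v : X => v) (nhdsWithin u K) (nhds u) := nhdsWithin_le_nhds
      exact (tendsto_const_nhds.min (hscont u hu hu0)).smul hid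
  obtain ⟨v, hv, hTv⟩ := schauder_fixed K hKclosed hKconv ⟨0, hK0⟩ (fun u => T (ρ u))
    (hTcont.comp hρcont hρK) (fun u hu => hTmaps _ (hρK u hu)) (by
      have hb := hTcompact (K ∩ Metric.closedBall 0 M) Set.inter_subset_left
        (Metric.isBounded_closedBall.subset Set.inter_subset_right)
      refine hb.of_isClosed_subset isClosed_closure (closure_mono ?_)
      rintro _ ⟨u, hu, rfl⟩
      exact ⟨ρ u, ⟨hρK u hu, by simpa using (hρle u hu).2⟩, rfl⟩)
  have hTv' : T (ρ v) = v := hTv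
  have hfix : T v = v := by
    by_cases hv0 : v = 0
    · rw [hv0, hρ0] at hTv'
      rw [hv0, hTv']
    · by_cases h1 : 1 ≤ s v
      · simp only [ρ] at hTv'
        rwa [min_eq_left h1, one_smul] at hTv'
      · push Not at h1
        exfalso
        obtain ⟨a1, a2, a3⟩ := c1 v hv hv0
        have hρv : ρ v = s v • v := by simp only [ρ]; rw [min_eq_right h1.le]
        rw [hρv] at hTv'
        rw [hTv'] at a2
        have h3 : s v • v ≠ 0 := smul_ne_zero a1.ne' hv0
        have h4 : (s v)⁻¹ • (s v • v) = v := by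
          rw [smul_smul, inv_mul_cancel₀ a1.ne', one_smul]
        have h5 := (hF (s v • v) (hKcone _ a1.le v hv) h3 (s v)⁻¹ (inv_pos.2 a1)).1
          (by rw [h4]; exact a2)
        rw [inv_eq_one] at h5
        exact h1.ne h5
  refine ⟨v, hv, hfix, fun hT0 => ?_⟩
  have hv0 : v ≠ 0 := by
    intro h
    rw [h] at hfix
    exact hT0 hfix
  have hFv : F (T v) v = 0 := by
    have := (hF v hv hv0 1 one_pos).2 rfl
    rw [one_smul] at this
    rw [hfix]; exact this
  refine ⟨hv0, ?_, hFv⟩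
  exact ((c1 v hv hv0).2.2 1 one_pos (by rw [one_smul]; exact hFv)).symm
end

section
/- Assume (H1) and the quantitative form of (H2): there exist c₂ with 0 < c₂ < 1/α₁ and δ₀ > 0 such that f(x,y) ≤ c₂·x for all 0 ≤ x ≤ δ₀ and all |y| ≤ R. Then for every u ∈ K₁ with |u|_∞ = 1, every v ∈ C([0,1],ℝ) with |v|_∞ ≤ R, and every σ with 0 < σ < δ₀, one has 𝓕(T₁(σu, v), σu) < 0. In particular, any σ > 0 satisfying 𝓕(T₁(σu, v), σu) = 0 satisfies σ ≥ δ₀. -/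
/-!
STATEMENT 12: Assume (H1) and the quantitative form of (H2): there exist c₂ with
0 < c₂ < 1/α₁ and δ₀ > 0 such that f(x,y) ≤ c₂·x for all 0 ≤ x ≤ δ₀ and all |y| ≤ R.
Then for every u ∈ K₁ with |u|_∞ = 1, every v ∈ C([0,1],ℝ) with |v|_∞ ≤ R, and every
σ with 0 < σ < δ₀, one has 𝓕(T₁(σu, v), σu) < 0.  In particular, any σ > 0 with
𝓕(T₁(σu, v), σu) = 0 satisfies σ ≥ δ₀.

Here 𝓕(ũ, u) = ∫₀¹ (ũ(t) − u(t))·u(t) dt and T₁(u,v)(t) = ∫₀¹ k₁(t,θ) f(u(θ),v(θ)) dθ.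
Elements of C([0,1],ℝ) are modelled as functions ℝ → ℝ that are continuous on [0,1].
-/

/-- The sup norm on `[0,1]`: `|u|_∞ = max_{t ∈ [0,1]} |u t|`. -/
noncomputable def supNorm (u : ℝ → ℝ) : ℝ :=
  sSup ((fun t => |u t|) '' Set.Icc (0:ℝ) 1)

/-- Membership in the cone
`K₁ = {u ∈ C([0,1],ℝ) : u ≥ 0 and min_{t∈[a,b]} u(t) ≥ c₁ |u|_∞}`. -/
def memK₁ (a b c₁ : ℝ) (u : ℝ → ℝ) : Prop :=
  ContinuousOn u (Set.Icc 0 1) ∧ (∀ t ∈ Set.Icc (0:ℝ) 1, 0 ≤ u t) ∧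
    ∀ t ∈ Set.Icc a b, c₁ * supNorm u ≤ u t

/-- The value `𝓕(T₁(σu,v), σu)` where `𝓕(ũ,u) = ∫₀¹ (ũ(t) − u(t))·u(t) dt` and
`T₁(u,v)(t) = ∫₀¹ k₁(t,θ) f(u(θ),v(θ)) dθ`. -/
noncomputable def nehariF (k₁ : ℝ → ℝ → ℝ) (f : ℝ → ℝ → ℝ) (u v : ℝ → ℝ) (σ : ℝ) : ℝ :=
  ∫ t in (0:ℝ)..1,
    ((∫ θ in (0:ℝ)..1, k₁ t θ * f (σ * u θ) (v θ)) - σ * u t) * (σ * u t)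

theorem param_cont (g : ℝ → ℝ → ℝ)
    (hg : ContinuousOn (fun p : ℝ × ℝ => g p.1 p.2) (Set.Icc 0 1 ×ˢ Set.Icc 0 1)) :
    ContinuousOn (fun t => ∫ θ in (0:ℝ)..1, g t θ) (Set.Icc 0 1) := by
  let P : ℝ → ℝ := fun x => max 0 (min 1 x)
  have hP : Continuous P := by fun_prop
  have hPm : ∀ x, P x ∈ Set.Icc (0:ℝ) 1 := fun x =>
    ⟨le_max_left _ _, max_le zero_le_one (min_le_left _ _)⟩
  have hPe : ∀ x ∈ Set.Icc (0:ℝ) 1, P x = x := fun x hx => by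
    simp [P, min_eq_right hx.2, max_eq_right hx.1]
  have h1 : Continuous (fun p : ℝ × ℝ => g (P p.1) (P p.2)) :=
    hg.comp_continuous (f := fun p : ℝ × ℝ => (P p.1, P p.2)) (by fun_prop)
      (fun p => ⟨hPm _, hPm _⟩)
  have h2 : Continuous (fun t => ∫ θ in (0:ℝ)..1, g (P t) (P θ)) :=
    intervalIntegral.continuous_parametric_intervalIntegral_of_continuous' h1 0 1
  refine h2.continuousOn.congr ?_
  intro t ht
  refine intervalIntegral.integral_congr ?_
  intro θ hθ
  rw [Set.uIcc_of_le zero_le_one] at hθ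
  simp only [hPe t ht, hPe θ hθ]

theorem F_neg_for_small_sigma
    -- k₁ is a nonnegative continuous function on [0,1]²
    (k₁ : ℝ → ℝ → ℝ)
    (hk₁cont : ContinuousOn (fun p : ℝ × ℝ => k₁ p.1 p.2)
      (Set.Icc 0 1 ×ˢ Set.Icc 0 1))
    (hk₁nonneg : ∀ t ∈ Set.Icc (0:ℝ) 1, ∀ θ ∈ Set.Icc (0:ℝ) 1, 0 ≤ k₁ t θ)
    -- f is continuous with f(x,y) ≥ 0 for x ≥ 0
    (f : ℝ → ℝ → ℝ) (hfcont : Continuous (fun p : ℝ × ℝ => f p.1 p.2))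
    (hfnonneg : ∀ x : ℝ, 0 ≤ x → ∀ y : ℝ, 0 ≤ f x y)
    (R : ℝ) (hR : 0 < R)
    -- condition (H1)
    (Φ : ℝ → ℝ) (hΦcont : ContinuousOn Φ (Set.Icc 0 1))
    (hΦnonneg : ∀ θ ∈ Set.Icc (0:ℝ) 1, 0 ≤ Φ θ)
    (a b : ℝ) (ha : 0 ≤ a) (hab : a ≤ b) (hb : b ≤ 1)
    (c₁ : ℝ) (hc₁pos : 0 < c₁) (hc₁le : c₁ ≤ 1)
    (hk₁upper : ∀ t ∈ Set.Icc (0:ℝ) 1, ∀ θ ∈ Set.Icc (0:ℝ) 1, k₁ t θ ≤ Φ θ)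
    (hk₁lower : ∀ t ∈ Set.Icc a b, ∀ θ ∈ Set.Icc (0:ℝ) 1, c₁ * Φ θ ≤ k₁ t θ)
    -- α₁ := max_{t∈[0,1]} Φ(t), with α₁ > 0
    (α₁ : ℝ) (hα₁ : IsGreatest (Φ '' Set.Icc (0:ℝ) 1) α₁) (hα₁pos : 0 < α₁)
    -- quantitative form of (H2)
    (c₂ : ℝ) (hc₂pos : 0 < c₂) (hc₂lt : c₂ < 1 / α₁)
    (δ₀ : ℝ) (hδ₀ : 0 < δ₀)
    (hH2 : ∀ x : ℝ, 0 ≤ x → x ≤ δ₀ → ∀ y : ℝ, |y| ≤ R → f x y ≤ c₂ * x)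
    -- u ∈ K₁ with |u|_∞ = 1, v ∈ C([0,1],ℝ) with |v|_∞ ≤ R
    (u v : ℝ → ℝ) (hu : memK₁ a b c₁ u) (huNorm : supNorm u = 1)
    (hvcont : ContinuousOn v (Set.Icc 0 1))
    (hvR : ∀ t ∈ Set.Icc (0:ℝ) 1, |v t| ≤ R) :
    (∀ σ : ℝ, 0 < σ → σ < δ₀ → nehariF k₁ f u v σ < 0) ∧
      (∀ σ : ℝ, 0 < σ → nehariF k₁ f u v σ = 0 → δ₀ ≤ σ) := by
  have main : ∀ σ : ℝ, 0 < σ → σ < δ₀ → nehariF k₁ f u v σ < 0 := by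
    intro σ hσ hσδ
    obtain ⟨huc, hu0, huab⟩ := hu
    have hu1 : ∀ t ∈ Set.Icc (0:ℝ) 1, u t ≤ 1 := by
      intro t ht
      rw [← huNorm]
      exact (le_abs_self _).trans
        (le_csSup (isCompact_Icc.image_of_continuousOn huc.abs).bddAbove ⟨t, ht, rfl⟩)
    have hm : 0 < ∫ θ in (0:ℝ)..1, u θ := by
      refine intervalIntegral.integral_pos zero_lt_one huc
        (fun x hx => hu0 x ⟨hx.1.le, hx.2⟩) ⟨a, ⟨ha, hab.trans hb⟩, ?_⟩
      have := huab a ⟨le_rfl, hab⟩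
      rw [huNorm] at this
      linarith
    have hui : IntervalIntegrable u MeasureTheory.volume 0 1 :=
      huc.intervalIntegrable_of_Icc zero_le_one
    have hfc : ContinuousOn (fun θ => f (σ * u θ) (v θ)) (Set.Icc 0 1) :=
      hfcont.comp_continuousOn (f := fun θ => (σ * u θ, v θ))
        ((continuousOn_const.mul huc).prodMk hvcont)
    have hgc : ContinuousOn (fun p : ℝ × ℝ => k₁ p.1 p.2 * f (σ * u p.2) (v p.2))
        (Set.Icc 0 1 ×ˢ Set.Icc 0 1) :=
      hk₁cont.mul (hfc.comp continuousOn_snd (fun p hp => hp.2))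
    have hT := param_cont (fun t θ => k₁ t θ * f (σ * u θ) (v θ)) hgc
    have hA : α₁ * c₂ < 1 := by
      rw [lt_div_iff₀ hα₁pos] at hc₂lt
      linarith
    set m := ∫ θ in (0:ℝ)..1, u θ with hmdef
    have hTle : ∀ t ∈ Set.Icc (0:ℝ) 1,
        (∫ θ in (0:ℝ)..1, k₁ t θ * f (σ * u θ) (v θ)) ≤ α₁ * c₂ * σ * m := by
      intro t ht
      rw [hmdef, ← intervalIntegral.integral_const_mul]
      refine intervalIntegral.integral_mono_on zero_le_one ?_ (hui.const_mul _) ?_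
      · refine ContinuousOn.intervalIntegrable_of_Icc zero_le_one ?_
        exact hgc.comp (f := fun θ : ℝ => (t, θ)) (by fun_prop) (fun θ hθ => ⟨ht, hθ⟩)
      · intro θ hθ
        have h0 : 0 ≤ σ * u θ := mul_nonneg hσ.le (hu0 θ hθ)
        have h1 : σ * u θ ≤ δ₀ := by nlinarith [hu1 θ hθ]
        have h2 : k₁ t θ ≤ α₁ := (hk₁upper t ht θ hθ).trans (hα₁.2 ⟨θ, hθ, rfl⟩)
        calc k₁ t θ * f (σ * u θ) (v θ) ≤ α₁ * (c₂ * (σ * u θ)) :=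
              mul_le_mul h2 (hH2 _ h0 h1 _ (hvR θ hθ)) (hfnonneg _ h0 _) hα₁pos.le
          _ = α₁ * c₂ * σ * u θ := by ring
    have key : nehariF k₁ f u v σ ≤
        ∫ t in (0:ℝ)..1, (σ ^ 2 * (α₁ * c₂ * m - 2 * m) * u t + σ ^ 2 * m ^ 2) := by
      unfold nehariF
      refine intervalIntegral.integral_mono_on zero_le_one ?_
        ((hui.const_mul _).add intervalIntegrable_const) ?_
      · refine ContinuousOn.intervalIntegrable_of_Icc zero_le_one ?_
        exact (hT.sub (continuousOn_const.mul huc)).mul (continuousOn_const.mul huc)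
      · intro t ht
        have h0 : 0 ≤ σ * u t := mul_nonneg hσ.le (hu0 t ht)
        have h1 := mul_le_mul_of_nonneg_right (hTle t ht) h0
        nlinarith [sq_nonneg (σ * (u t - m))]
    rw [intervalIntegral.integral_add (hui.const_mul _) intervalIntegrable_const,
      intervalIntegral.integral_const_mul, ← hmdef] at key
    simp only [intervalIntegral.integral_const, sub_zero, one_smul] at key
    have : 0 < (σ * m) ^ 2 * (1 - α₁ * c₂) := mul_pos (by positivity) (by linarith)
    nlinarith
  refine ⟨main, fun σ hσ h => ?_⟩
  by_contra hlt
  exact (main σ hσ (not_le.mp hlt)).ne h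
end
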